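/- arXiv:math/0511488 — 2 statements merged into one kernel-verified Lean document; each statement's English description precedes it below -/
import Mathlib

section
/- (Stenson; odd-dimensional case of Kalai's identity) For every polytope P of odd dimension d = 2k+1 (k ≥ 0): (k+2)·g_k(P) = Σ_{i=0}^{k} (i+1) · Σ_{F} g_i(F)·g_{k−i}(P/F), where the inner sum runs over all faces F of P with dim F = 2i. -/
open Classical Polynomial

section PolytopeDefs

variable {V : Type*} [AddCommGroup V] [Module ℝ V]

/-- A polytope: the convex hull of finitely many points. -/
def IsPolytope (P : Set V) : Prop := ∃ S : Finset V, P = convexHull ℝ (S : Set V)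

/-- Faces of a polytope (or of a cone): the set itself, the empty face, and the
sets of maximizers of linear functionals (equivalently, intersections with
supporting hyperplanes). -/
def IsFace (P F : Set V) : Prop :=
  F = P ∨ F = ∅ ∨ ∃ l : V →ₗ[ℝ] ℝ, F = {x | x ∈ P ∧ ∀ y ∈ P, l y ≤ l x}

/-- Dimension of a polytope: the dimension of its affine span, with the
convention `pdim ∅ = -1`. -/
noncomputable def pdim (P : Set V) : ℤ :=
  if P = ∅ then -1 else (Module.finrank ℝ (affineSpan ℝ P).direction : ℤ)

/-- The `g`-truncation: from the toric `h`-polynomial of a `d`-dimensional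
polytope to its toric `g`-polynomial, via `g_k = h_k - h_{k-1}` for
`0 ≤ k ≤ d/2`, with `h_{-1} = 0`. -/
noncomputable def truncG (d : ℤ) (h : Polynomial ℚ) : Polynomial ℚ :=
  ∑ k ∈ Finset.range (d.toNat / 2 + 1),
    Polynomial.C (h.coeff k - if k = 0 then 0 else h.coeff (k - 1)) * Polynomial.X ^ k

/-- Fuelled recursion computing the toric `h`-polynomial of the interval `[F,G]`
of a face lattice (with `F` playing the role of the empty face):
`h([F,G],t) = ∑_{F ≤ G' < G} g([F,G'],t) · (t-1)^{dim G - dim G' - 1}`. -/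
noncomputable def relHAux : ℕ → Set V → Set V → Polynomial ℚ
  | 0, _, _ => 1
  | n + 1, F, G =>
      if G = F then 1
      else ∑ᶠ G' ∈ {G' : Set V | IsFace G G' ∧ F ⊆ G' ∧ G' ≠ G},
        truncG (pdim G' - pdim F - 1) (relHAux n F G') *
          (Polynomial.X - 1) ^ (pdim G - pdim G' - 1).toNat

/-- The toric `h`-polynomial of the interval `[F,G]` in a face lattice. -/
noncomputable def relH (F G : Set V) : Polynomial ℚ := relHAux (pdim G + 1).toNat F G

/-- The toric `g`-polynomial of the interval `[F,G]` in a face lattice;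
`relG F P` is the polynomial `g(P/F, t)`. -/
noncomputable def relG (F G : Set V) : Polynomial ℚ :=
  truncG (pdim G - pdim F - 1) (relH F G)

/-- The toric `h`-polynomial `h(P,t)` of a polytope `P`. -/
noncomputable def toricH (P : Set V) : Polynomial ℚ := relH ∅ P

/-- The toric `g`-polynomial `g(P,t)` of a polytope `P`. -/
noncomputable def toricG (P : Set V) : Polynomial ℚ := relG ∅ P

end PolytopeDefs

/-!
On an Eulerian poset the recursion defining `g` amounts to the Kazhdan–Lusztig–Stanley relation: the
reflection of `g x z` in its rank difference is `∑ y, g x y * (X - 1) ^ (ρ z - ρ y)`. The operator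
`f ↦ (X - 1) * f' - n * f` obeys the Leibniz rule for degree bounds `n`, kills `(X - 1) ^ n` and is
compatible with reflection. Applying it to the relation shows, by induction on intervals, that the
twisted derivative of `g x z` plus the convolution of `g` with its middle coefficients is
palindromic. Since it has no coefficients in its upper half, it vanishes; comparing coefficients
gives the identity.

The face lattice of a polytope is Eulerian because the Euler characteristic of relatively open
convex sets is additive (slice by hyperplanes and integrate), and the relative interior of a pointed
cone is partitioned into the shadows of its proper faces with respect to an interior direction.
Intervals of the face lattice are treated by passing to the quotient by the span of the lower face.
-/

namespace Stenson

section Polynomials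

variable {R : Type*} [CommRing R]

lemma reflect_sum {ι : Type*} (s : Finset ι) (n : ℕ) (f : ι → R[X]) :
    reflect n (∑ i ∈ s, f i) = ∑ i ∈ s, reflect n (f i) := by
  ext j
  simp [coeff_reflect, finsetSum_coeff]

lemma natDegree_X_sub_one_pow_le (n : ℕ) : ((X - 1 : R[X]) ^ n).natDegree ≤ n := by
  simpa using natDegree_pow_le_of_le n (natDegree_X_sub_C_le (1 : R))

lemma reflect_X_sub_one_pow (n : ℕ) : reflect n ((X - 1 : R[X]) ^ n) = (1 - X) ^ n := by
  induction n with
  | zero => simp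
  | succ n ih =>
    have hdeg : (X - 1 : R[X]).natDegree ≤ 1 := by
      simpa using natDegree_X_sub_one_pow_le (R := R) 1
    rw [pow_succ, reflect_mul _ _ (natDegree_X_sub_one_pow_le n) hdeg, ih, pow_succ, reflect_sub,
      reflect_one_X, reflect_one, pow_one]

lemma eq_zero_of_reflect_eq_self {n : ℕ} {f : R[X]} (hf : reflect n f = f)
    (hupper : ∀ j, n ≤ 2 * j → f.coeff j = 0) : f = 0 := by
  ext j
  by_cases hj : n ≤ 2 * j
  · exact hupper j hj
  · rw [← hf, coeff_reflect, revAt_le (by omega)]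
    exact hupper _ (by omega)

lemma reflect_eq_add_of_reflect_eq_neg [IsAddTorsionFree R] {n : ℕ} {f g : R[X]}
    (hf : reflect n f = -f) (hg : ∀ j, g.coeff j = if 2 * j < n then -f.coeff j else 0) :
    reflect n g = f + g := by
  have hanti (j : ℕ) : f.coeff (revAt n j) = -f.coeff j := by
    rw [← coeff_reflect, hf, coeff_neg]
  have hfixed {j : ℕ} (hj : revAt n j = j) : f.coeff j = 0 :=
    self_eq_neg.mp (by simpa only [hj] using hanti j)
  ext j
  rw [coeff_reflect, coeff_add, hg, hg, hanti, neg_neg]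
  rcases lt_or_ge n j with hj | hj
  · simp [revAt_eq_self_of_lt hj, hfixed (revAt_eq_self_of_lt hj)]
  rcases lt_trichotomy (2 * j) n with h | h | h
  · rw [revAt_le hj, if_neg (by omega), if_pos h, add_neg_cancel]
  · simp [hfixed (j := j) (by rw [revAt_le hj]; omega)]
  · rw [revAt_le hj, if_pos (by omega), if_neg (by omega), add_zero]

/-- The operator `f ↦ (X - 1) f' - n f`. It is additive in `n` along products, like a derivation,
it kills `(X - 1) ^ n`, and it commutes with reflection up to a shift of the degree bound. -/
noncomputable def twistedDeriv (n : ℕ) (f : R[X]) : R[X] :=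
  (X - 1) * derivative f - C (n : R) * f

lemma twistedDeriv_mul (m n : ℕ) (f g : R[X]) :
    twistedDeriv (m + n) (f * g) = twistedDeriv m f * g + f * twistedDeriv n g := by
  simp only [twistedDeriv, derivative_mul, Nat.cast_add, C_add]
  ring

lemma twistedDeriv_X_sub_one_pow (n : ℕ) : twistedDeriv n ((X - 1 : R[X]) ^ n) = 0 := by
  induction n with
  | zero => simp [twistedDeriv]
  | succ n ih =>
    rw [pow_succ, twistedDeriv_mul, ih]
    simp [twistedDeriv]

lemma twistedDeriv_sum {ι : Type*} (n : ℕ) (s : Finset ι) (f : ι → R[X]) :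
    twistedDeriv n (∑ i ∈ s, f i) = ∑ i ∈ s, twistedDeriv n (f i) := by
  simp only [twistedDeriv, derivative_sum, Finset.mul_sum, Finset.sum_sub_distrib]

lemma coeff_twistedDeriv (n : ℕ) (f : R[X]) (j : ℕ) :
    (twistedDeriv n f).coeff j = ((j : R) - n) * f.coeff j - (j + 1) * f.coeff (j + 1) := by
  rw [twistedDeriv, sub_mul, one_mul]
  cases j <;> simp [coeff_derivative] <;> ring

lemma reflect_twistedDeriv {n : ℕ} {f : R[X]} (hf : f.natDegree ≤ n + 1) :
    reflect n (twistedDeriv (n + 1) f) = twistedDeriv (n + 1) (reflect (n + 1) f) := by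
  have hzero {m : ℕ} (hm : n + 1 < m) : f.coeff m = 0 :=
    coeff_eq_zero_of_natDegree_lt (hf.trans_lt hm)
  ext j
  rw [coeff_reflect, coeff_twistedDeriv, coeff_twistedDeriv, coeff_reflect, coeff_reflect]
  rcases lt_trichotomy j (n + 1) with hj | rfl | hj
  · obtain ⟨m, rfl⟩ : ∃ m, n = j + m := Nat.exists_eq_add_of_le (Nat.le_of_lt_succ hj)
    rw [revAt_le (by omega), revAt_le (by omega), revAt_le (by omega), Nat.add_sub_cancel_left,
      show j + m + 1 - j = m + 1 by omega, show j + m + 1 - (j + 1) = m by omega]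
    push_cast
    ring
  · rw [revAt_eq_self_of_lt (by omega), revAt_eq_self_of_lt (Nat.lt_succ_self _),
      hzero (Nat.lt_succ_self _)]
    simp
  · rw [revAt_eq_self_of_lt (by omega), revAt_eq_self_of_lt hj, revAt_eq_self_of_lt (by omega)]

end Polynomials

section MiddleTerm

variable {L R : Type*} [CommRing R] (ρ : L → ℕ) (g : L → L → R[X])

/-- The term `(i + 1) g_i X ^ i` of `g x z` in the top degree `i` allowed when `[x, z]` has odd
rank `2 i + 1`, that is, when it is the face lattice of a polytope of dimension `2 i`. -/
noncomputable def middleTerm (x z : L) : R[X] :=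
  if Odd (ρ z - ρ x) then
    C (((ρ z - ρ x) / 2 + 1 : ℕ) * (g x z).coeff ((ρ z - ρ x) / 2)) * X ^ ((ρ z - ρ x) / 2)
  else 0

variable {ρ g} {x z : L}

lemma middleTerm_of_rank_eq {i : ℕ} (hi : ρ z - ρ x = 2 * i + 1) :
    middleTerm ρ g x z = C ((i + 1 : R) * (g x z).coeff i) * X ^ i := by
  rw [middleTerm, if_pos ⟨i, hi⟩, show (ρ z - ρ x) / 2 = i by omega]
  push_cast
  rfl

lemma middleTerm_of_not_odd (h : ¬Odd (ρ z - ρ x)) : middleTerm ρ g x z = 0 :=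
  if_neg h

lemma coeff_middleTerm_mul {i : ℕ} (hi : ρ z - ρ x = 2 * i + 1) (f : R[X]) (j : ℕ) :
    (middleTerm ρ g x z * f).coeff j =
      if i ≤ j then (i + 1 : R) * (g x z).coeff i * f.coeff (j - i) else 0 := by
  rw [middleTerm_of_rank_eq hi, mul_assoc, coeff_C_mul, coeff_X_pow_mul', mul_ite, mul_zero]

end MiddleTerm

section EulerianPosets

variable {L : Type*} [PartialOrder L] [LocallyFiniteOrder L]

lemma sum_Icc_Icc_comm {M : Type*} [AddCommMonoid M] (x y : L) (f : L → L → M) :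
    ∑ z ∈ Finset.Icc x y, ∑ w ∈ Finset.Icc z y, f z w =
      ∑ w ∈ Finset.Icc x y, ∑ z ∈ Finset.Icc x w, f z w := by
  refine Finset.sum_comm' fun z w ↦ ?_
  simp only [Finset.mem_Icc]
  exact ⟨fun ⟨⟨hxz, _⟩, hzw, hwy⟩ ↦ ⟨⟨hxz, hzw⟩, hxz.trans hzw, hwy⟩,
    fun ⟨⟨hxz, hzw⟩, _, hwy⟩ ↦ ⟨⟨hxz, hzw.trans hwy⟩, hzw, hwy⟩⟩

lemma sum_Ico_Icc_comm {M : Type*} [AddCommMonoid M] (x y : L) (f : L → L → M) :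
    ∑ z ∈ Finset.Ico x y, ∑ w ∈ Finset.Icc x z, f z w =
      ∑ w ∈ Finset.Ico x y, ∑ z ∈ Finset.Ico w y, f z w := by
  refine Finset.sum_comm' fun z w ↦ ?_
  simp only [Finset.mem_Icc, Finset.mem_Ico]
  exact ⟨fun ⟨⟨_, hzy⟩, hxw, hwz⟩ ↦ ⟨⟨hwz, hzy⟩, hxw, hwz.trans_lt hzy⟩,
    fun ⟨⟨hwz, hzy⟩, hxw, _⟩ ↦ ⟨⟨hxw.trans hwz, hzy⟩, hxw, hwz⟩⟩

/-- `ρ` ranks the poset so that it is Eulerian: the alternating rank sum over every nontrivial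
interval vanishes. Only differences of `ρ` matter, and `ρ` need not be a grading. -/
structure IsEulerianRank (ρ : L → ℕ) : Prop where
  strictMono : StrictMono ρ
  sum_Icc : ∀ ⦃x y⦄, x < y → ∑ z ∈ Finset.Icc x y, (-1 : ℤ) ^ ρ z = 0

/-- `g x y` is the toric `g`-polynomial of the interval `[x, y]`, a polytope of dimension
`ρ y - ρ x - 1`. The recursion `g_j = h_j - h_{j-1}` reads `g = (1 - X) h` below the middle degree,
and the factor `X - 1` has been absorbed into the powers of `X - 1` that occur in `h`. -/
structure IsToricG {R : Type*} [CommRing R] (ρ : L → ℕ) (g : L → L → R[X]) : Prop where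
  self : ∀ x, g x x = 1
  coeff : ∀ ⦃x y⦄, x < y → ∀ j, (g x y).coeff j = if 2 * j < ρ y - ρ x then
    -(∑ z ∈ Finset.Ico x y, g x z * (X - 1) ^ (ρ y - ρ z)).coeff j else 0

lemma IsEulerianRank.sum_Ico {ρ : L → ℕ} (hρ : IsEulerianRank ρ) {x y : L} (hxy : x < y) :
    ∑ z ∈ Finset.Ico x y, (-1 : ℤ) ^ (ρ y - ρ z) = -1 := by
  have hpow : ∀ z ∈ Finset.Ico x y, (-1 : ℤ) ^ (ρ y - ρ z) = (-1) ^ ρ y * (-1) ^ ρ z := by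
    intro z hz
    rw [← pow_sub_mul_pow (-1) (hρ.strictMono (Finset.mem_Ico.mp hz).2).le, mul_assoc, ← mul_pow]
    simp
  have hsum := hρ.sum_Icc hxy
  rw [← Finset.sum_Ico_add_eq_sum_Icc hxy.le] at hsum
  rw [Finset.sum_congr rfl hpow, ← Finset.mul_sum, eq_neg_of_add_eq_zero_left hsum, mul_neg,
    ← mul_pow]
  simp

section ToricG

variable {R : Type*} [CommRing R] {ρ : L → ℕ} {g : L → L → R[X]}

lemma IsToricG.coeff_eq_zero (hg : IsToricG ρ g) {x y : L} (hxy : x < y) {j : ℕ}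
    (hj : ρ y - ρ x ≤ 2 * j) : (g x y).coeff j = 0 := by
  rw [hg.coeff hxy, if_neg hj.not_gt]

lemma IsToricG.natDegree_le (hg : IsToricG ρ g) {x y : L} (hxy : x ≤ y) :
    (g x y).natDegree ≤ ρ y - ρ x := by
  rcases hxy.eq_or_lt with rfl | hlt
  · simp [hg.self]
  · exact natDegree_le_iff_coeff_eq_zero.mpr fun j hj ↦ hg.coeff_eq_zero hlt (by omega)

lemma reflect_sum_Ico (hρ : IsEulerianRank ρ) (hg : IsToricG ρ g) {x y : L}
    (hreflect : ∀ z ∈ Finset.Ico x y, reflect (ρ z - ρ x) (g x z) =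
      ∑ w ∈ Finset.Icc x z, g x w * (X - 1) ^ (ρ z - ρ w)) :
    reflect (ρ y - ρ x) (∑ z ∈ Finset.Ico x y, g x z * (X - 1) ^ (ρ y - ρ z)) =
      -∑ z ∈ Finset.Ico x y, g x z * (X - 1) ^ (ρ y - ρ z) := by
  have hterm : ∀ z ∈ Finset.Ico x y, reflect (ρ y - ρ x) (g x z * (X - 1) ^ (ρ y - ρ z)) =
      ∑ w ∈ Finset.Icc x z, g x w * (X - 1) ^ (ρ y - ρ w) * (-1) ^ (ρ y - ρ z) := by
    intro z hz
    obtain ⟨hxz, hzy⟩ := Finset.mem_Ico.mp hz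
    have hρxz := hρ.strictMono.monotone hxz
    have hρzy := (hρ.strictMono hzy).le
    rw [show ρ y - ρ x = (ρ z - ρ x) + (ρ y - ρ z) by omega,
      reflect_mul _ _ (hg.natDegree_le hxz) (natDegree_X_sub_one_pow_le _), hreflect z hz,
      reflect_X_sub_one_pow, Finset.sum_mul]
    refine Finset.sum_congr rfl fun w hw ↦ ?_
    have hρwz := hρ.strictMono.monotone (Finset.mem_Icc.mp hw).2
    rw [show ρ y - ρ w = (ρ z - ρ w) + (ρ y - ρ z) by omega, pow_add,
      show (1 - X : R[X]) = (X - 1) * (-1) by ring, mul_pow]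
    ring
  rw [reflect_sum, Finset.sum_congr rfl hterm, sum_Ico_Icc_comm, ← Finset.sum_neg_distrib]
  refine Finset.sum_congr rfl fun w hw ↦ ?_
  have hsign : ∑ z ∈ Finset.Ico w y, (-1 : R[X]) ^ (ρ y - ρ z) = -1 := by
    exact_mod_cast congrArg (Int.cast (R := R[X])) (hρ.sum_Ico (Finset.mem_Ico.mp hw).2)
  rw [← Finset.mul_sum, hsign, mul_neg_one]

/-- Stanley's form of the Kazhdan–Lusztig relation. -/
theorem IsToricG.reflect_eq_sum [IsAddTorsionFree R] (hρ : IsEulerianRank ρ) (hg : IsToricG ρ g)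
    {x y : L} (hxy : x ≤ y) : reflect (ρ y - ρ x) (g x y) =
      ∑ z ∈ Finset.Icc x y, g x z * (X - 1) ^ (ρ y - ρ z) := by
  have := hρ.strictMono.wellFoundedLT
  induction y using WellFoundedLT.induction with
  | ind y ih =>
  rcases hxy.eq_or_lt with rfl | hlt
  · simp [hg.self]
  · have hanti := reflect_sum_Ico hρ hg fun z hz ↦
      ih z (Finset.mem_Ico.mp hz).2 (Finset.mem_Ico.mp hz).1
    rw [← Finset.sum_Ico_add_eq_sum_Icc hxy, Nat.sub_self, pow_zero, mul_one]
    exact reflect_eq_add_of_reflect_eq_neg hanti (hg.coeff hlt)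

end ToricG

section Defect

variable {R : Type*} [CommRing R] (ρ : L → ℕ) (g : L → L → R[X])

/-- The polynomial whose vanishing is the generating function form of Stenson's identity. -/
noncomputable def stensonDefect (x y : L) : R[X] :=
  twistedDeriv (ρ y - ρ x) (g x y) + ∑ z ∈ Finset.Icc x y, middleTerm ρ g x z * g z y

variable {ρ g}

lemma reflect_middleTerm_mul [IsAddTorsionFree R] (hρ : IsEulerianRank ρ) (hg : IsToricG ρ g)
    {x y z : L} (hxz : x ≤ z) (hzy : z ≤ y) :
    reflect (ρ y - ρ x - 1) (middleTerm ρ g x z * g z y) =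
      ∑ w ∈ Finset.Icc z y, middleTerm ρ g x z * g z w * (X - 1) ^ (ρ y - ρ w) := by
  by_cases hodd : Odd (ρ z - ρ x)
  · obtain ⟨i, hi⟩ := hodd
    have hρxz := hρ.strictMono.monotone hxz
    have hρzy := hρ.strictMono.monotone hzy
    rw [middleTerm_of_rank_eq hi, show ρ y - ρ x - 1 = (i + i) + (ρ y - ρ z) by omega,
      reflect_mul _ _ ((natDegree_C_mul_X_pow_le _ _).trans (Nat.le_add_left i i))
        (hg.natDegree_le hzy), reflect_C_mul_X_pow, revAt_le (Nat.le_add_left i i),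
      Nat.add_sub_cancel, hg.reflect_eq_sum hρ hzy, Finset.mul_sum]
    simp only [mul_assoc]
  · simp [middleTerm_of_not_odd hodd]

lemma reflect_stensonDefect [IsAddTorsionFree R] (hρ : IsEulerianRank ρ) (hg : IsToricG ρ g)
    {x y : L} (hxy : x < y) : reflect (ρ y - ρ x - 1) (stensonDefect ρ g x y) =
      ∑ w ∈ Finset.Icc x y, stensonDefect ρ g x w * (X - 1) ^ (ρ y - ρ w) := by
  have hderiv : reflect (ρ y - ρ x - 1) (twistedDeriv (ρ y - ρ x) (g x y)) =
      ∑ w ∈ Finset.Icc x y, twistedDeriv (ρ w - ρ x) (g x w) * (X - 1) ^ (ρ y - ρ w) := by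
    obtain ⟨m, hm⟩ := Nat.exists_eq_add_of_lt (Nat.sub_pos_of_lt (hρ.strictMono hxy))
    rw [zero_add] at hm
    rw [hm, Nat.add_sub_cancel, reflect_twistedDeriv (hm ▸ hg.natDegree_le hxy.le), ← hm,
      hg.reflect_eq_sum hρ hxy.le, twistedDeriv_sum]
    refine Finset.sum_congr rfl fun w hw ↦ ?_
    have hρxw := hρ.strictMono.monotone (Finset.mem_Icc.mp hw).1
    have hρwy := hρ.strictMono.monotone (Finset.mem_Icc.mp hw).2
    rw [show ρ y - ρ x = (ρ w - ρ x) + (ρ y - ρ w) by omega, twistedDeriv_mul,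
      twistedDeriv_X_sub_one_pow, mul_zero, add_zero]
  have hmiddle : reflect (ρ y - ρ x - 1) (∑ z ∈ Finset.Icc x y, middleTerm ρ g x z * g z y) =
      ∑ w ∈ Finset.Icc x y,
        (∑ z ∈ Finset.Icc x w, middleTerm ρ g x z * g z w) * (X - 1) ^ (ρ y - ρ w) := by
    simp only [Finset.sum_mul]
    rw [reflect_sum, ← sum_Icc_Icc_comm]
    refine Finset.sum_congr rfl fun z hz ↦ ?_
    exact reflect_middleTerm_mul hρ hg (Finset.mem_Icc.mp hz).1 (Finset.mem_Icc.mp hz).2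
  simp only [stensonDefect, add_mul, reflect_add, hderiv, hmiddle, Finset.sum_add_distrib]

lemma coeff_stensonDefect_eq_zero (hρ : IsEulerianRank ρ) (hg : IsToricG ρ g)
    {x y : L} (hxy : x < y) {j : ℕ} (hj : ρ y - ρ x - 1 ≤ 2 * j) :
    (stensonDefect ρ g x y).coeff j = 0 := by
  have hbelow : ∀ z ∈ Finset.Ico x y, (middleTerm ρ g x z * g z y).coeff j = 0 := by
    intro z hz
    obtain ⟨hxz, hzy⟩ := Finset.mem_Ico.mp hz
    by_cases hodd : Odd (ρ z - ρ x)
    · obtain ⟨i, hi⟩ := hodd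
      have hρxz := hρ.strictMono.monotone hxz
      have hρzy := hρ.strictMono hzy
      rw [coeff_middleTerm_mul hi]
      split_ifs with hij
      · rw [hg.coeff_eq_zero hzy (by omega), mul_zero]
      · rfl
    · simp [middleTerm_of_not_odd hodd]
  have htop : (middleTerm ρ g x y).coeff j = ((ρ y - ρ x : ℕ) - (j : R)) * (g x y).coeff j := by
    by_cases hodd : Odd (ρ y - ρ x)
    · obtain ⟨i, hi⟩ := hodd
      rw [middleTerm_of_rank_eq hi, coeff_C_mul_X_pow, hi]
      split_ifs with hji
      · subst hji
        push_cast
        ring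
      · rw [hg.coeff_eq_zero hxy (by omega), mul_zero]
    · rw [middleTerm_of_not_odd hodd, coeff_zero, hg.coeff_eq_zero hxy, mul_zero]
      obtain ⟨q, hq⟩ := Nat.not_odd_iff_even.mp hodd
      omega
  rw [stensonDefect, ← Finset.sum_Ico_add_eq_sum_Icc hxy.le, hg.self, mul_one, coeff_add,
    coeff_add, finsetSum_coeff, Finset.sum_eq_zero hbelow, htop, coeff_twistedDeriv,
    hg.coeff_eq_zero hxy (j := j + 1) (by omega)]
  ring

theorem stensonDefect_eq_zero [IsAddTorsionFree R] (hρ : IsEulerianRank ρ) (hg : IsToricG ρ g)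
    {x y : L} (hxy : x ≤ y) : stensonDefect ρ g x y = 0 := by
  have := hρ.strictMono.wellFoundedLT
  induction y using WellFoundedLT.induction with
  | ind y ih =>
  rcases hxy.eq_or_lt with rfl | hlt
  · simp [stensonDefect, middleTerm, twistedDeriv, hg.self]
  · refine eq_zero_of_reflect_eq_self ?_ fun j hj ↦ coeff_stensonDefect_eq_zero hρ hg hlt hj
    rw [reflect_stensonDefect hρ hg hlt, ← Finset.sum_Ico_add_eq_sum_Icc hxy,
      Finset.sum_eq_zero, zero_add, Nat.sub_self, pow_zero, mul_one]
    intro w hw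
    rw [ih w (Finset.mem_Ico.mp hw).2 (Finset.mem_Ico.mp hw).1, zero_mul]

lemma coeff_sum_middleTerm_mul (hρ : IsEulerianRank ρ) {x y : L} {k : ℕ}
    (hk : ρ y = ρ x + 2 * k + 2) :
    (∑ z ∈ Finset.Icc x y, middleTerm ρ g x z * g z y).coeff k =
      ∑ i ∈ Finset.range (k + 1), ((i : R) + 1) *
        ∑ z ∈ Finset.Icc x y with ρ z = ρ x + 2 * i + 1,
          (g x z).coeff i * (g z y).coeff (k - i) := by
  simp only [Finset.mul_sum, Finset.sum_filter]
  rw [Finset.sum_comm, finsetSum_coeff]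
  refine Finset.sum_congr rfl fun z hz ↦ ?_
  have hρxz := hρ.strictMono.monotone (Finset.mem_Icc.mp hz).1
  have hρzy := hρ.strictMono.monotone (Finset.mem_Icc.mp hz).2
  by_cases hodd : Odd (ρ z - ρ x)
  · obtain ⟨i, hi⟩ := hodd
    rw [coeff_middleTerm_mul hi, if_pos (by omega), Finset.sum_eq_single i, if_pos (by omega),
      mul_assoc]
    · exact fun j _ hji ↦ by rw [if_neg (by omega), mul_zero]
    · exact fun hik ↦ absurd (Finset.mem_range.mpr (by omega)) hik
  · rw [middleTerm_of_not_odd hodd, zero_mul, coeff_zero, Finset.sum_eq_zero]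
    exact fun i _ ↦ by rw [if_neg fun hi ↦ hodd ⟨i, by omega⟩, mul_zero]

theorem IsToricG.stenson [IsAddTorsionFree R] (hρ : IsEulerianRank ρ) (hg : IsToricG ρ g)
    {x y : L} (hxy : x ≤ y) {k : ℕ} (hk : ρ y = ρ x + 2 * k + 2) :
    ((k : R) + 2) * (g x y).coeff k = ∑ i ∈ Finset.range (k + 1), ((i : R) + 1) *
      ∑ z ∈ Finset.Icc x y with ρ z = ρ x + 2 * i + 1,
        (g x z).coeff i * (g z y).coeff (k - i) := by
  have hlt : x < y := hxy.lt_of_ne (by rintro rfl; omega)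
  have hcoeff := congrArg (Polynomial.coeff · k) (stensonDefect_eq_zero hρ hg hxy)
  simp only [stensonDefect, coeff_add, coeff_twistedDeriv, coeff_zero,
    hg.coeff_eq_zero hlt (j := k + 1) (by omega)] at hcoeff
  rw [← coeff_sum_middleTerm_mul hρ hk, eq_neg_of_add_eq_zero_right hcoeff,
    show ρ y - ρ x = 2 * k + 2 by omega]
  push_cast
  ring

end Defect

end EulerianPosets

section EulerIntegral

open Filter Topology

/-- `e` is the integral of `φ` over the line with respect to the Euler characteristic with compact
supports. It counts the jumps of `φ` from the value at a point to the limit `r` from the right; the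
value `m` near `-∞` makes up for the missing left endpoint of the line. -/
def HasEulerIntegral (φ : ℝ → ℤ) (e : ℤ) : Prop :=
  ∃ (r : ℝ → ℤ) (m : ℤ), (∀ t, ∀ᶠ s in 𝓝[>] t, φ s = r t) ∧ (∀ᶠ s in atBot, φ s = m) ∧
    (Function.support fun t ↦ φ t - r t).Finite ∧ ∑ᶠ t, (φ t - r t) - m = e

lemma HasEulerIntegral.unique {φ : ℝ → ℤ} {e e' : ℤ} (h : HasEulerIntegral φ e)
    (h' : HasEulerIntegral φ e') : e = e' := by
  obtain ⟨r, m, hr, hm, -, rfl⟩ := h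
  obtain ⟨r', m', hr', hm', -, rfl⟩ := h'
  have hrr' : r = r' := funext fun t ↦ by
    obtain ⟨s, hs, hs'⟩ := ((hr t).and (hr' t)).exists
    exact hs.symm.trans hs'
  obtain ⟨s, hs, hs'⟩ := (hm.and hm').exists
  rw [hrr', ← hs, hs']

lemma hasEulerIntegral_zero : HasEulerIntegral (fun _ ↦ 0) 0 :=
  ⟨fun _ ↦ 0, 0, by simp, by simp, by simp, by simp⟩

lemma HasEulerIntegral.add {φ ψ : ℝ → ℤ} {e e' : ℤ} (hφ : HasEulerIntegral φ e)
    (hψ : HasEulerIntegral ψ e') : HasEulerIntegral (fun t ↦ φ t + ψ t) (e + e') := by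
  obtain ⟨r, m, hr, hm, hfin, rfl⟩ := hφ
  obtain ⟨r', m', hr', hm', hfin', rfl⟩ := hψ
  have hsub (t : ℝ) : φ t + ψ t - (r t + r' t) = (φ t - r t) + (ψ t - r' t) := by ring
  refine ⟨fun t ↦ r t + r' t, m + m', fun t ↦ ?_, ?_, ?_, ?_⟩
  · filter_upwards [hr t, hr' t] with s hs hs'
    rw [hs, hs']
  · filter_upwards [hm, hm'] with s hs hs'
    rw [hs, hs']
  · simp only [hsub]
    exact (hfin.union hfin').subset (Function.support_add _ _)
  · simp only [hsub, finsum_add_distrib hfin hfin']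
    ring

lemma HasEulerIntegral.const_mul {φ : ℝ → ℤ} {e : ℤ} (c : ℤ) (h : HasEulerIntegral φ e) :
    HasEulerIntegral (fun t ↦ c * φ t) (c * e) := by
  obtain ⟨r, m, hr, hm, hfin, rfl⟩ := h
  refine ⟨fun t ↦ c * r t, c * m, fun t ↦ ?_, ?_, ?_, ?_⟩
  · filter_upwards [hr t] with s hs
    rw [hs]
  · filter_upwards [hm] with s hs
    rw [hs]
  · simp only [← mul_sub]
    exact hfin.subset (Function.support_mul_subset_right _ _)
  · simp only [← mul_sub, ← mul_finsum _ c]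

lemma HasEulerIntegral.sum {ι : Type*} {s : Finset ι} {φ : ι → ℝ → ℤ} {e : ι → ℤ}
    (h : ∀ i ∈ s, HasEulerIntegral (φ i) (e i)) :
    HasEulerIntegral (fun t ↦ ∑ i ∈ s, φ i t) (∑ i ∈ s, e i) := by
  induction s using Finset.induction_on with
  | empty => simpa using hasEulerIntegral_zero
  | insert i s hi ih =>
    simp only [Finset.sum_insert hi]
    exact (h i (Finset.mem_insert_self i s)).add
      (ih fun j hj ↦ h j (Finset.mem_insert_of_mem hj))

lemma hasEulerIntegral_indicator_singleton (a : ℝ) :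
    HasEulerIntegral (({a} : Set ℝ).indicator 1) 1 := by
  refine ⟨fun _ ↦ 0, 0, fun t ↦ ?_, ?_, ?_, ?_⟩
  · have hne : ∀ᶠ s in 𝓝[>] t, s ≠ a := by
      rcases lt_or_ge t a with h | h
      · exact ((eventually_lt_nhds h).filter_mono nhdsWithin_le_nhds).mono fun s hs ↦ hs.ne
      · filter_upwards [self_mem_nhdsWithin] with s hs
        exact (h.trans_lt hs).ne'
    filter_upwards [hne] with s hs
    simp [hs]
  · filter_upwards [eventually_lt_atBot a] with s hs
    simp [hs.ne]
  · exact (Set.finite_singleton a).subset fun t ht ↦ by simpa using ht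
  · rw [finsum_eq_single _ a fun t ht ↦ by simp [ht]]
    simp

section Interval

variable {J : Set ℝ}

lemma eventually_nhdsGT_notMem (hconn : J.OrdConnected) {c t : ℝ} (hc : c ∈ J) (hct : c < t)
    (ht : t ∉ J) : ∀ᶠ s in 𝓝[>] t, s ∉ J := by
  filter_upwards [self_mem_nhdsWithin] with s hs hsJ
  exact ht (hconn.out hc hsJ ⟨hct.le, le_of_lt hs⟩)

lemma eventually_nhdsGT_mem_of_isGLB (hconn : J.OrdConnected) (hne : J.Nonempty) {a : ℝ}
    (ha : IsGLB J a) (haJ : a ∉ J) : ∀ᶠ s in 𝓝[>] a, s ∈ J := by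
  obtain ⟨b, hb⟩ := hne
  have hab : a < b := (ha.1 hb).lt_of_ne (ne_of_mem_of_not_mem hb haJ).symm
  filter_upwards [Ioo_mem_nhdsGT hab] with s hs
  obtain ⟨c, hc, -, hcs⟩ := ha.exists_between hs.1
  exact hconn.out hc hb ⟨hcs.le, hs.2.le⟩

lemma notMem_of_isOpen_of_isGLB (hJ : IsOpen J) {a : ℝ} (ha : IsGLB J a) : a ∉ J := by
  intro haJ
  have hmem : ∀ᶠ s in 𝓝[<] a, s ∈ J := nhdsWithin_le_nhds (hJ.mem_nhds haJ)
  obtain ⟨s, hsJ, hsa⟩ := (hmem.and self_mem_nhdsWithin).exists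
  exact (ha.1 hsJ).not_gt hsa

lemma hasEulerIntegral_indicator_of_isGLB (hJ : IsOpen J) (hconn : J.OrdConnected)
    (hne : J.Nonempty) {a : ℝ} (ha : IsGLB J a) : HasEulerIntegral (J.indicator 1) (-1) := by
  have haJ : a ∉ J := notMem_of_isOpen_of_isGLB hJ ha
  refine ⟨(insert a J).indicator 1, 0, fun t ↦ ?_, ?_, ?_, ?_⟩
  · by_cases ht : t ∈ insert a J
    · have hmem : ∀ᶠ s in 𝓝[>] t, s ∈ J := by
        rcases ht with rfl | ht
        · exact eventually_nhdsGT_mem_of_isGLB hconn hne ha haJ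
        · exact nhdsWithin_le_nhds (hJ.mem_nhds ht)
      filter_upwards [hmem] with s hs
      simp only [Set.indicator_of_mem hs, Set.indicator_of_mem ht, Pi.one_apply]
    · rw [Set.mem_insert_iff, not_or] at ht
      have hnotMem : ∀ᶠ s in 𝓝[>] t, s ∉ J := by
        rcases lt_or_gt_of_ne ht.1 with hta | hta
        · exact ((eventually_lt_nhds hta).filter_mono nhdsWithin_le_nhds).mono
            fun s hs hsJ ↦ (ha.1 hsJ).not_gt hs
        · obtain ⟨c, hc, -, hct⟩ := ha.exists_between hta
          exact eventually_nhdsGT_notMem hconn hc hct ht.2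
      filter_upwards [hnotMem] with s hs
      rw [Set.indicator_of_notMem hs, Set.indicator_of_notMem (by simpa using ht)]
  · filter_upwards [eventually_lt_atBot a] with s hs
    exact Set.indicator_of_notMem (fun hsJ ↦ (ha.1 hsJ).not_gt hs) _
  · refine (Set.finite_singleton a).subset fun t ht ↦ ?_
    by_contra hta
    exact ht (by simp [Set.indicator_apply, Set.mem_singleton_iff.not.mp hta])
  · rw [finsum_eq_single _ a fun t hta ↦ by simp [Set.indicator_apply, hta]]
    simp [haJ]

lemma hasEulerIntegral_indicator_of_not_bddBelow (hJ : IsOpen J) (hconn : J.OrdConnected)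
    (hbdd : ¬BddBelow J) : HasEulerIntegral (J.indicator 1) (-1) := by
  have hlow (s : ℝ) : ∃ c ∈ J, c < s := not_bddBelow_iff.mp hbdd s
  refine ⟨J.indicator 1, 1, fun t ↦ ?_, ?_, by simp, by simp⟩
  · by_cases ht : t ∈ J
    · filter_upwards [nhdsWithin_le_nhds (hJ.mem_nhds ht)] with s hs
      simp only [Set.indicator_of_mem hs, Set.indicator_of_mem ht, Pi.one_apply]
    · obtain ⟨c, hc, hct⟩ := hlow t
      filter_upwards [eventually_nhdsGT_notMem hconn hc hct ht] with s hs
      rw [Set.indicator_of_notMem hs, Set.indicator_of_notMem ht]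
  · obtain ⟨b, hb, -⟩ := hlow 0
    filter_upwards [eventually_lt_atBot b] with s hs
    obtain ⟨c, hc, hcs⟩ := hlow s
    exact Set.indicator_of_mem (hconn.out hc hb ⟨hcs.le, hs.le⟩) _

lemma hasEulerIntegral_indicator_of_isOpen (hJ : IsOpen J) (hconn : J.OrdConnected)
    (hne : J.Nonempty) : HasEulerIntegral (J.indicator 1) (-1) := by
  by_cases hbdd : BddBelow J
  · exact hasEulerIntegral_indicator_of_isGLB hJ hconn hne (isGLB_csInf hne hbdd)
  · exact hasEulerIntegral_indicator_of_not_bddBelow hJ hconn hbdd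

end Interval

end EulerIntegral

section RelativelyOpenConvex

variable {W : Type*} [AddCommGroup W] [Module ℝ W] {C : Set W}

/-- `C` is convex and open in its affine span; openness is expressed without a topology: every
segment in `C` can be prolonged a little beyond its endpoints. -/
structure IsRelOpenConvex (C : Set W) : Prop where
  convex : Convex ℝ C
  exists_prolong : ∀ x ∈ C, ∀ y ∈ C, ∃ ε : ℝ, 0 < ε ∧ x + ε • (x - y) ∈ C

lemma IsRelOpenConvex.slice (hC : IsRelOpenConvex C) (l : Module.Dual ℝ W) (t : ℝ) :
    IsRelOpenConvex (C ∩ {x | l x = t}) where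
  convex := hC.convex.inter (convex_hyperplane l.isLinear t)
  exists_prolong := by
    rintro x ⟨hx, hxt : l x = t⟩ y ⟨hy, hyt : l y = t⟩
    obtain ⟨ε, hε, hmem⟩ := hC.exists_prolong x hx y hy
    exact ⟨ε, hε, hmem, by simp [hxt, hyt]⟩

lemma IsRelOpenConvex.exists_forall_abs_le (hC : IsRelOpenConvex C) {x : W} (hx : x ∈ C) {d : W}
    (hd : d ∈ vectorSpan ℝ C) : ∃ ε : ℝ, 0 < ε ∧ ∀ s : ℝ, |s| ≤ ε → x + s • d ∈ C := by
  rw [vectorSpan_eq_span_vsub_set_right ℝ hx] at hd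
  induction hd using Submodule.span_induction with
  | mem d hd =>
    obtain ⟨y, hy, rfl⟩ := hd
    obtain ⟨ε, hε, hmem⟩ := hC.exists_prolong x hx y hy
    refine ⟨min 1 ε, by positivity, fun s hs ↦ ?_⟩
    obtain ⟨hs_lower, hs_upper⟩ := abs_le.mp hs
    have hline (s : ℝ) : x + s • (y -ᵥ x) = AffineMap.lineMap x y s := by
      rw [AffineMap.lineMap_apply, vadd_eq_add, add_comm]
    have hprolong : AffineMap.lineMap x y (-ε) ∈ C := by
      rwa [← hline, vsub_eq_sub, neg_smul, ← smul_neg, neg_sub]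
    rw [hline]
    refine (hC.convex.affine_preimage (AffineMap.lineMap x y)).ordConnected.out hprolong
      (by simpa using hy : (1 : ℝ) ∈ _) ⟨?_, ?_⟩
    · linarith [min_le_right 1 ε]
    · linarith [min_le_left 1 ε]
  | zero => exact ⟨1, one_pos, fun s _ ↦ by simpa using hx⟩
  | add d e _ _ hd he =>
    obtain ⟨a, ha, hmem_a⟩ := hd
    obtain ⟨b, hb, hmem_b⟩ := he
    refine ⟨min a b / 2, by positivity, fun s hs ↦ ?_⟩
    have hs' : |2 * s| ≤ min a b := by rw [abs_mul, abs_two]; linarith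
    have hmid := hC.convex.midpoint_mem (hmem_a (2 * s) (hs'.trans (min_le_left a b)))
      (hmem_b (2 * s) (hs'.trans (min_le_right a b)))
    convert hmid using 1
    rw [midpoint_eq_smul_add, invOf_eq_inv]
    module
  | smul c d _ hd =>
    obtain ⟨a, ha, hmem⟩ := hd
    refine ⟨a / (|c| + 1), by positivity, fun s hs ↦ ?_⟩
    rw [smul_smul]
    refine hmem _ ?_
    rw [le_div_iff₀ (by positivity)] at hs
    rw [abs_mul]
    nlinarith [abs_nonneg s]

lemma IsRelOpenConvex.vectorSpan_slice (hC : IsRelOpenConvex C) (l : Module.Dual ℝ W) {t : ℝ}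
    (hne : (C ∩ {x | l x = t}).Nonempty) :
    vectorSpan ℝ (C ∩ {x | l x = t}) = vectorSpan ℝ C ⊓ LinearMap.ker l := by
  apply le_antisymm
  · refine le_inf (vectorSpan_mono ℝ Set.inter_subset_left) (Submodule.span_le.mpr ?_)
    rintro _ ⟨y, ⟨-, hy : l y = t⟩, z, ⟨-, hz : l z = t⟩, rfl⟩
    simp [hy, hz]
  · rintro d ⟨hd, hld : l d = 0⟩
    obtain ⟨x, hx, hxt : l x = t⟩ := hne
    obtain ⟨ε, hε, hmem⟩ := hC.exists_forall_abs_le hx hd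
    have hstep : ε • d ∈ vectorSpan ℝ (C ∩ {x | l x = t}) := by
      rw [show ε • d = (x + ε • d) -ᵥ x by simp]
      exact vsub_mem_vectorSpan ℝ ⟨hmem ε (abs_of_pos hε).le, by simp [hld, hxt]⟩ ⟨hx, hxt⟩
    exact (Submodule.smul_mem_iff _ hε.ne').mp hstep

lemma finrank_inf_ker_add_one (D : Submodule ℝ W) [FiniteDimensional ℝ D] {l : Module.Dual ℝ W}
    (hl : ∃ d ∈ D, l d ≠ 0) :
    Module.finrank ℝ (D ⊓ LinearMap.ker l : Submodule ℝ W) + 1 = Module.finrank ℝ D := by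
  have hne : l.domRestrict D ≠ 0 := by
    obtain ⟨d, hd, hld⟩ := hl
    exact fun h ↦ hld (LinearMap.congr_fun h ⟨d, hd⟩)
  rw [← Module.Dual.finrank_ker_add_one_of_ne_zero hne, LinearMap.ker_domRestrict,
    ← Submodule.finrank_map_subtype_eq D, Submodule.map_comap_subtype]

/-- The Euler characteristic with compact supports of a relatively open convex set. -/
noncomputable def eulerChar (C : Set W) : ℤ :=
  if C.Nonempty then (-1) ^ Module.finrank ℝ (vectorSpan ℝ C) else 0

lemma eulerChar_of_nonempty (hC : C.Nonempty) :
    eulerChar C = (-1) ^ Module.finrank ℝ (vectorSpan ℝ C) :=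
  if_pos hC

@[simp]
lemma eulerChar_empty : eulerChar (∅ : Set W) = 0 :=
  if_neg Set.not_nonempty_empty

@[simp]
lemma eulerChar_singleton (x : W) : eulerChar {x} = 1 := by
  rw [eulerChar_of_nonempty (Set.singleton_nonempty x), vectorSpan_singleton]
  simp

lemma IsRelOpenConvex.isOpen_image (hC : IsRelOpenConvex C) {l : Module.Dual ℝ W} {x y : W}
    (hx : x ∈ C) (hy : y ∈ C) (hxy : l x ≠ l y) : IsOpen (l '' C) := by
  have hconn : (l '' C).OrdConnected := (hC.convex.linear_image l).ordConnected
  rw [isOpen_iff_mem_nhds]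
  rintro _ ⟨z, hz, rfl⟩
  obtain ⟨w, hw, hwz⟩ : ∃ w ∈ C, l w ≠ l z := by
    by_cases hxz : l x = l z
    · exact ⟨y, hy, fun hyz ↦ hxy (hxz.trans hyz.symm)⟩
    · exact ⟨x, hx, hxz⟩
  obtain ⟨ε, hε, hmem⟩ := hC.exists_prolong z hz w hw
  have hlε : l (z + ε • (z - w)) = l z + ε * (l z - l w) := by simp
  rcases lt_or_gt_of_ne hwz with hlt | hgt
  · refine Filter.mem_of_superset (Icc_mem_nhds (b := l (z + ε • (z - w))) hlt ?_)
      (hconn.out ⟨w, hw, rfl⟩ ⟨_, hmem, rfl⟩)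
    rw [hlε]
    nlinarith
  · refine Filter.mem_of_superset (Icc_mem_nhds (a := l (z + ε • (z - w))) ?_ hgt)
      (hconn.out ⟨_, hmem, rfl⟩ ⟨w, hw, rfl⟩)
    rw [hlε]
    nlinarith

lemma IsRelOpenConvex.eulerChar_slice (hC : IsRelOpenConvex C)
    [FiniteDimensional ℝ (vectorSpan ℝ C)] {l : Module.Dual ℝ W} {x y : W} (hx : x ∈ C)
    (hy : y ∈ C) (hxy : l x ≠ l y) (t : ℝ) :
    eulerChar (C ∩ {x | l x = t}) = -eulerChar C * (l '' C).indicator 1 t := by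
  by_cases ht : t ∈ l '' C
  · have hne : (C ∩ {x | l x = t}).Nonempty := ht
    have hker : ∃ d ∈ vectorSpan ℝ C, l d ≠ 0 :=
      ⟨x -ᵥ y, vsub_mem_vectorSpan ℝ hx hy, by simpa [sub_eq_zero] using hxy⟩
    rw [eulerChar_of_nonempty hne, hC.vectorSpan_slice l hne, eulerChar_of_nonempty ⟨x, hx⟩,
      ← finrank_inf_ker_add_one _ hker, Set.indicator_of_mem ht, pow_succ]
    simp
  · have hempty : C ∩ {x | l x = t} = ∅ := Set.not_nonempty_iff_eq_empty.mp ht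
    rw [hempty, eulerChar_empty, Set.indicator_of_notMem ht, mul_zero]

/-- Fubini's theorem for the Euler characteristic. -/
lemma IsRelOpenConvex.hasEulerIntegral_slice (hC : IsRelOpenConvex C)
    [FiniteDimensional ℝ (vectorSpan ℝ C)] (l : Module.Dual ℝ W) :
    HasEulerIntegral (fun t ↦ eulerChar (C ∩ {x | l x = t})) (eulerChar C) := by
  rcases C.eq_empty_or_nonempty with rfl | ⟨x, hx⟩
  · simpa using hasEulerIntegral_zero
  by_cases hconst : ∀ y ∈ C, l y = l x
  · have hslice (t : ℝ) : eulerChar (C ∩ {x | l x = t}) =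
        eulerChar C * ({l x} : Set ℝ).indicator 1 t := by
      by_cases ht : t = l x
      · have hall : C ∩ {x | l x = t} = C :=
          Set.inter_eq_left.mpr fun y hy ↦ (hconst y hy).trans ht.symm
        rw [hall]
        simp [ht]
      · have hnone : C ∩ {x | l x = t} = ∅ := Set.eq_empty_of_forall_notMem
          fun y ⟨hy, hyt⟩ ↦ ht (hyt.symm.trans (hconst y hy))
        simp [hnone, ht]
    simpa [hslice] using (hasEulerIntegral_indicator_singleton (l x)).const_mul (eulerChar C)
  · push Not at hconst
    obtain ⟨y, hy, hyx⟩ := hconst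
    have hinterval := hasEulerIntegral_indicator_of_isOpen (hC.isOpen_image hy hx hyx)
      (hC.convex.linear_image l).ordConnected ⟨l x, x, hx, rfl⟩
    simpa [hC.eulerChar_slice hy hx hyx] using hinterval.const_mul (-eulerChar C)

end RelativelyOpenConvex

section EulerRelation

variable {W : Type*} [AddCommGroup W] [Module ℝ W]

lemma exists_finset_dual_separating (U : Submodule ℝ W) [FiniteDimensional ℝ U] :
    ∃ T : Finset (Module.Dual ℝ W), ∀ x ∈ U, (∀ l ∈ T, l x = 0) → x = 0 := by
  let b := Module.finBasis ℝ U
  choose l hl using fun i ↦ (b.coord i).exists_extend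
  refine ⟨Finset.univ.image l, fun x hx hzero ↦ ?_⟩
  have hcoord (i) : b.coord i ⟨x, hx⟩ = 0 := by
    rw [← hl i]
    exact hzero (l i) (Finset.mem_image_of_mem l (Finset.mem_univ i))
  exact congrArg Subtype.val ((b.forall_coord_eq_zero_iff).mp hcoord)

lemma vectorSpan_le_of_subset {C : Set W} {U : Submodule ℝ W} (hC : C ⊆ U) :
    vectorSpan ℝ C ≤ U := by
  refine Submodule.span_le.mpr ?_
  rintro _ ⟨x, hx, y, hy, rfl⟩
  exact U.sub_mem (hC hx) (hC hy)

variable {ι : Type*} [Fintype ι] {c : ι → ℤ} {C : ι → Set W}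

lemma sum_mul_eulerChar_of_subsingleton (hC : (⋃ i, C i).Subsingleton)
    (hsum : ∀ x, ∑ i, c i * (C i).indicator 1 x = 0) : ∑ i, c i * eulerChar (C i) = 0 := by
  rcases (⋃ i, C i).eq_empty_or_nonempty with hempty | ⟨x, hx⟩
  · exact Finset.sum_eq_zero fun i _ ↦ by
      rw [Set.iUnion_eq_empty.mp hempty i, eulerChar_empty, mul_zero]
  · rw [← hsum x]
    refine Finset.sum_congr rfl fun i _ ↦ congrArg (c i * ·) ?_
    have hCi : C i ⊆ {x} := fun y hy ↦ hC (Set.mem_iUnion_of_mem i hy) hx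
    rcases Set.subset_singleton_iff_eq.mp hCi with h | h <;> simp [h]

lemma sum_mul_eulerChar_of_separating (T : Finset (Module.Dual ℝ W))
    (hC : ∀ i, IsRelOpenConvex (C i)) (hfin : ∀ i, FiniteDimensional ℝ (vectorSpan ℝ (C i)))
    (hsep : ∀ x ∈ ⋃ i, C i, ∀ y ∈ ⋃ i, C i, (∀ l ∈ T, l x = l y) → x = y)
    (hsum : ∀ x, ∑ i, c i * (C i).indicator 1 x = 0) : ∑ i, c i * eulerChar (C i) = 0 := by
  induction T using Finset.induction_on generalizing C with
  | empty =>
    exact sum_mul_eulerChar_of_subsingleton (fun x hx y hy ↦ hsep x hx y hy (by simp)) hsum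
  | insert l T _ ih =>
    have hslice (t : ℝ) : ∑ i, c i * eulerChar (C i ∩ {x | l x = t}) = 0 := by
      refine ih (fun i ↦ (hC i).slice l t)
        (fun i ↦ Submodule.finiteDimensional_of_le (vectorSpan_mono ℝ Set.inter_subset_left))
        (fun x hx y hy hT ↦ ?_) fun x ↦ ?_
      · rw [← Set.iUnion_inter] at hx hy
        exact hsep x hx.1 y hy.1 ((Finset.forall_mem_insert _ _ _).mpr ⟨hx.2.trans hy.2.symm, hT⟩)
      · by_cases hx : l x = t
        · simpa [Set.indicator_apply, hx] using hsum x
        · simp [hx]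
    have hintegral := HasEulerIntegral.sum (s := Finset.univ) fun i _ ↦
      ((hC i).hasEulerIntegral_slice l).const_mul (c i)
    simp only [hslice] at hintegral
    exact hintegral.unique hasEulerIntegral_zero

/-- The Euler characteristic extends to a valuation. -/
theorem sum_mul_eulerChar_eq_zero (U : Submodule ℝ W) [FiniteDimensional ℝ U]
    (hC : ∀ i, IsRelOpenConvex (C i)) (hU : ∀ i, C i ⊆ U)
    (hsum : ∀ x, ∑ i, c i * (C i).indicator 1 x = 0) : ∑ i, c i * eulerChar (C i) = 0 := by
  obtain ⟨T, hT⟩ := exists_finset_dual_separating U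
  have hunion : ⋃ i, C i ⊆ U := Set.iUnion_subset hU
  refine sum_mul_eulerChar_of_separating T hC
    (fun i ↦ Submodule.finiteDimensional_of_le (vectorSpan_le_of_subset (hU i)))
    (fun x hx y hy hxy ↦ ?_) hsum
  refine sub_eq_zero.mp (hT _ (U.sub_mem (hunion hx) (hunion hy)) fun l hl ↦ ?_)
  rw [map_sub, hxy l hl, sub_self]

lemma eulerChar_eq_sum {κ : Type*} {T : Finset κ} {C : κ → Set W} {D : Set W}
    {U : Submodule ℝ W} [FiniteDimensional ℝ U] (hC : ∀ k ∈ T, IsRelOpenConvex (C k))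
    (hD : IsRelOpenConvex D) (hU : D ⊆ U) (hdisj : (T : Set κ).PairwiseDisjoint C)
    (hunion : ⋃ k ∈ T, C k = D) : eulerChar D = ∑ k ∈ T, eulerChar (C k) := by
  have hrel := sum_mul_eulerChar_eq_zero (c := fun k : Option T ↦ k.elim 1 fun _ ↦ -1)
    (C := fun k : Option T ↦ k.elim D fun k ↦ C k) U ?_ ?_ fun x ↦ ?_
  · simpa [Fintype.sum_option, Finset.sum_attach T fun k ↦ eulerChar (C k), add_neg_eq_zero]
      using hrel
  · rintro (_ | k)
    exacts [hD, hC k k.2]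
  · rintro (_ | k)
    exacts [hU, (Set.subset_biUnion_of_mem k.2).trans (hunion.subset.trans hU)]
  · have hind : D.indicator (1 : W → ℤ) x = ∑ k ∈ T, (C k).indicator 1 x := by
      rw [← hunion, Finset.indicator_biUnion_apply _ _ hdisj]
    simp [Fintype.sum_option, hind, Finset.sum_attach T fun k ↦ (C k).indicator (1 : W → ℤ) x]

end EulerRelation

section VectorConfiguration

variable {ι W : Type*} [AddCommGroup W] [Module ℝ W]

/-- The linear span of the vectors `v i`, `i ∈ A`, of a configuration `v`. -/
def configSpan (v : ι → W) (A : Finset ι) : Submodule ℝ W := Submodule.span ℝ (v '' A)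

/-- The cone of nonnegative combinations of the vectors `v i`, `i ∈ A`. -/
def coneHull (v : ι → W) (A : Finset ι) : PointedCone ℝ W := PointedCone.hull ℝ (v '' A)

/-- The combinations of the vectors `v i`, `i ∈ A`, with all coefficients positive: the relative
interior of `coneHull v A`. -/
def openConeHull (v : ι → W) (A : Finset ι) : Set W :=
  {x | ∃ a : ι → ℝ, (∀ i ∈ A, 0 < a i) ∧ ∑ i ∈ A, a i • v i = x}

variable {v : ι → W} {A B : Finset ι} {x y z : W}

instance finiteDimensional_configSpan : FiniteDimensional ℝ (configSpan v A) :=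
  FiniteDimensional.span_of_finite ℝ (A.finite_toSet.image v)

lemma mem_configSpan_iff : x ∈ configSpan v A ↔ ∃ a : ι → ℝ, ∑ i ∈ A, a i • v i = x :=
  Submodule.mem_span_image_finset_iff_exists_fun' ℝ

lemma mem_configSpan_of_mem {i : ι} (hi : i ∈ A) : v i ∈ configSpan v A :=
  Submodule.subset_span ⟨i, hi, rfl⟩

lemma configSpan_le_iff {U : Submodule ℝ W} : configSpan v A ≤ U ↔ ∀ i ∈ A, v i ∈ U := by
  rw [configSpan, Submodule.span_le, Set.image_subset_iff]
  rfl

lemma mem_coneHull_iff :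
    x ∈ coneHull v A ↔ ∃ a : ι → ℝ, (∀ i ∈ A, 0 ≤ a i) ∧ ∑ i ∈ A, a i • v i = x := by
  refine (Submodule.mem_span_image_finset_iff_exists_fun' _).trans ⟨?_, ?_⟩
  · rintro ⟨c, rfl⟩
    exact ⟨fun i ↦ c i, fun i _ ↦ (c i).2, rfl⟩
  · rintro ⟨a, ha, rfl⟩
    refine ⟨fun i ↦ ⟨max (a i) 0, le_max_right _ _⟩, Finset.sum_congr rfl fun i hi ↦ ?_⟩
    exact congrArg (· • v i) (max_eq_left (ha i hi))

lemma mem_coneHull_iff_exists_coe :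
    x ∈ coneHull v A ↔ ∃ a : A → ℝ, (∀ i, 0 ≤ a i) ∧ ∑ i, a i • v i = x := by
  refine (Submodule.mem_span_image_finset_iff_exists_fun _).trans ⟨?_, ?_⟩
  · rintro ⟨c, rfl⟩
    exact ⟨fun i ↦ c i, fun i ↦ (c i).2, rfl⟩
  · rintro ⟨a, ha, rfl⟩
    exact ⟨fun i ↦ ⟨a i, ha i⟩, rfl⟩

lemma coneHull_mono (h : A ⊆ B) : coneHull v A ≤ coneHull v B :=
  Submodule.span_mono (Set.image_mono (Finset.coe_subset.mpr h))

lemma coneHull_subset_configSpan : (coneHull v A : Set W) ⊆ configSpan v A := fun _ hx ↦ by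
  obtain ⟨a, -, h⟩ := mem_coneHull_iff.mp hx
  exact mem_configSpan_iff.mpr ⟨a, h⟩

lemma openConeHull_subset_coneHull : openConeHull v A ⊆ coneHull v A := by
  rintro x ⟨a, ha, h⟩
  exact mem_coneHull_iff.mpr ⟨a, fun i hi ↦ (ha i hi).le, h⟩

lemma openConeHull_subset_configSpan : openConeHull v A ⊆ configSpan v A :=
  openConeHull_subset_coneHull.trans coneHull_subset_configSpan

lemma sum_mem_openConeHull (v : ι → W) (A : Finset ι) : ∑ i ∈ A, v i ∈ openConeHull v A :=
  ⟨fun _ ↦ 1, fun _ _ ↦ one_pos, by simp⟩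

lemma add_mem_openConeHull (hx : x ∈ coneHull v A) (hy : y ∈ openConeHull v A) :
    x + y ∈ openConeHull v A := by
  obtain ⟨a, ha, rfl⟩ := mem_coneHull_iff.mp hx
  obtain ⟨b, hb, rfl⟩ := hy
  refine ⟨fun i ↦ a i + b i, fun i hi ↦ add_pos_of_nonneg_of_pos (ha i hi) (hb i hi), ?_⟩
  simp only [add_smul, Finset.sum_add_distrib]

lemma smul_mem_openConeHull {c : ℝ} (hc : 0 < c) (hx : x ∈ openConeHull v A) :
    c • x ∈ openConeHull v A := by
  obtain ⟨a, ha, rfl⟩ := hx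
  refine ⟨fun i ↦ c * a i, fun i hi ↦ mul_pos hc (ha i hi), ?_⟩
  simp only [mul_smul, Finset.smul_sum]

open Filter Topology in
lemma exists_pos_forall_mul_lt {a b : ι → ℝ} (ha : ∀ i ∈ A, 0 < a i) :
    ∃ ε > 0, ∀ i ∈ A, ε * b i < a i := by
  have hlim (i : ι) : Tendsto (fun ε : ℝ ↦ ε * b i) (𝓝[>] 0) (𝓝 0) := by
    simpa using (tendsto_id.mul_const (b i)).mono_left (nhdsWithin_le_nhds (a := (0 : ℝ)))
  have hev : ∀ᶠ ε in 𝓝[>] (0 : ℝ), ∀ i ∈ A, ε * b i < a i :=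
    A.eventually_all.mpr fun i hi ↦ (hlim i).eventually_lt_const (ha i hi)
  obtain ⟨ε, hlt, hε⟩ := (hev.and self_mem_nhdsWithin).exists
  exact ⟨ε, hε, hlt⟩

lemma exists_sub_smul_mem_openConeHull (hx : x ∈ openConeHull v A) (hy : y ∈ configSpan v A) :
    ∃ ε : ℝ, 0 < ε ∧ x - ε • y ∈ openConeHull v A := by
  obtain ⟨a, ha, rfl⟩ := hx
  obtain ⟨b, rfl⟩ := mem_configSpan_iff.mp hy
  obtain ⟨ε, hε, hlt⟩ := exists_pos_forall_mul_lt (b := b) ha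
  refine ⟨ε, hε, fun i ↦ a i - ε * b i, fun i hi ↦ sub_pos.mpr (hlt i hi), ?_⟩
  simp only [sub_smul, mul_smul, Finset.sum_sub_distrib, Finset.smul_sum]

lemma isRelOpenConvex_openConeHull : IsRelOpenConvex (openConeHull v A) where
  convex := convex_iff_forall_pos.mpr fun _ hx _ hy _ _ hs ht _ ↦
    add_mem_openConeHull (openConeHull_subset_coneHull (smul_mem_openConeHull hs hx))
      (smul_mem_openConeHull ht hy)
  exists_prolong x hx y hy := by
    obtain ⟨ε, hε, hmem⟩ := exists_sub_smul_mem_openConeHull hx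
      ((configSpan v A).sub_mem (openConeHull_subset_configSpan hy)
        (openConeHull_subset_configSpan hx))
    refine ⟨ε, hε, ?_⟩
    rwa [← neg_sub y x, smul_neg, ← sub_eq_add_neg]

lemma vectorSpan_openConeHull : vectorSpan ℝ (openConeHull v A) = configSpan v A := by
  refine le_antisymm (vectorSpan_le_of_subset openConeHull_subset_configSpan)
    (configSpan_le_iff.mpr fun i hi ↦ ?_)
  have hvi : v i ∈ coneHull v A := Submodule.subset_span ⟨i, hi, rfl⟩
  have hsum := sum_mem_openConeHull v A
  simpa using vsub_mem_vectorSpan ℝ (add_mem_openConeHull hvi hsum) hsum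

lemma eulerChar_openConeHull :
    eulerChar (openConeHull v A) = (-1) ^ Module.finrank ℝ (configSpan v A) := by
  rw [eulerChar_of_nonempty ⟨_, sum_mem_openConeHull v A⟩, vectorSpan_openConeHull]

lemma exists_dual_pos_of_disjoint {E : Type*} [TopologicalSpace E] [AddCommGroup E] [Module ℝ E]
    [IsTopologicalAddGroup E] [ContinuousSMul ℝ E] {C : Set E} {M : Submodule ℝ E}
    (hconv : Convex ℝ C) (hopen : IsOpen C) (hdisj : Disjoint C M) :
    ∃ f : Module.Dual ℝ E, (∀ x ∈ C, 0 < f x) ∧ M ≤ LinearMap.ker f := by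
  obtain ⟨f, u, hC, hM⟩ := geometric_hahn_banach_open hconv hopen M.convex hdisj
  have hu : u ≤ 0 := by simpa using hM 0 M.zero_mem
  refine ⟨-(f : E →ₗ[ℝ] ℝ), fun x hx ↦ neg_pos.mpr ((hC x hx).trans_le hu), fun x hx ↦ ?_⟩
  by_contra hfx
  have hfx : f x ≠ 0 := by simpa using hfx
  have hbound := hM _ (M.smul_mem ((u - 1) / f x) hx)
  rw [map_smul, smul_eq_mul, div_mul_cancel₀ _ hfx] at hbound
  linarith

lemma apply_nonneg_of_forall_pos {κ : Type*} {f : Module.Dual ℝ (κ → ℝ)}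
    (hf : ∀ a : κ → ℝ, (∀ i, 0 < a i) → 0 < f a) {a : κ → ℝ} (ha : 0 ≤ a) : 0 ≤ f a := by
  have hone : 0 < f 1 := hf 1 fun _ ↦ one_pos
  by_contra! hneg
  have hε : 0 < -f a / f 1 := div_pos (neg_pos.mpr hneg) hone
  have hpos := hf (a + (-f a / f 1) • 1) fun i ↦ by
    simpa using add_pos_of_nonneg_of_pos (ha i) hε
  rw [map_add, map_smul, smul_eq_mul, div_mul_cancel₀ _ hone.ne', add_neg_cancel] at hpos
  exact hpos.false

lemma sum_extend_smul (a : A → ℝ) :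
    ∑ i ∈ A, (if h : i ∈ A then a ⟨i, h⟩ else 0) • v i = ∑ i, a i • v i := by
  rw [← Finset.sum_coe_sort]
  simp

lemma disjoint_openConeHull_span_singleton (hz : z ∈ coneHull v A)
    (hz' : z ∉ openConeHull v A) : Disjoint (openConeHull v A) (Submodule.span ℝ {z}) := by
  rw [Set.disjoint_left]
  intro x hx hxz
  obtain ⟨c, rfl⟩ := Submodule.mem_span_singleton.mp hxz
  rcases lt_or_ge 0 c with hc | hc
  · refine hz' ?_
    simpa [smul_smul, hc.ne'] using smul_mem_openConeHull (inv_pos.mpr hc) hx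
  · have hnegz : -c • z ∈ coneHull v A :=
      (coneHull v A).smul_mem (neg_nonneg.mpr hc) hz
    have hzero : (0 : W) ∈ openConeHull v A := by simpa using add_mem_openConeHull hnegz hx
    exact hz' (by simpa using add_mem_openConeHull hz hzero)

/-- Separate the open positive orthant of the space of coefficients from the coefficients of
multiples of `z`. -/
lemma exists_dual_of_notMem_openConeHull (hz : z ∈ coneHull v A) (hz' : z ∉ openConeHull v A) :
    ∃ l : Module.Dual ℝ W, (∀ i ∈ A, 0 ≤ l (v i)) ∧ l z = 0 ∧ ∃ i ∈ A, l (v i) ≠ 0 := by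
  let φ : (A → ℝ) →ₗ[ℝ] W := Fintype.linearCombination ℝ fun i : A ↦ v i
  let O : Set (A → ℝ) := Set.univ.pi fun _ ↦ Set.Ioi 0
  have hO : ∀ a ∈ O, φ a ∈ openConeHull v A := fun a ha ↦
    ⟨fun i ↦ if h : i ∈ A then a ⟨i, h⟩ else 0, fun i hi ↦ by simpa [hi] using ha ⟨i, hi⟩ trivial,
      sum_extend_smul a⟩
  have hdisj : Disjoint O ((Submodule.span ℝ {z}).comap φ) := Set.disjoint_left.mpr fun a ha ↦
    Set.disjoint_left.mp (disjoint_openConeHull_span_singleton hz hz') (hO a ha)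
  obtain ⟨f, hf, hker⟩ := exists_dual_pos_of_disjoint (convex_pi fun _ _ ↦ convex_Ioi 0)
    (isOpen_set_pi Set.finite_univ fun _ _ ↦ isOpen_Ioi) hdisj
  obtain ⟨l, rfl⟩ : f ∈ LinearMap.range φ.dualMap := by
    rw [LinearMap.range_dualMap_eq_dualAnnihilator_ker, Submodule.mem_dualAnnihilator]
    exact fun a ha ↦ hker (by simp [LinearMap.mem_ker.mp ha])
  have hpos (a : A → ℝ) (ha : ∀ i, 0 < a i) : 0 < φ.dualMap l a := hf a fun i _ ↦ ha i
  have hsum : 0 < ∑ i : A, l (v i) := by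
    simpa [φ, Fintype.linearCombination_apply] using hpos 1 fun _ ↦ one_pos
  refine ⟨l, fun i hi ↦ ?_, ?_, ?_⟩
  · have hnonneg := apply_nonneg_of_forall_pos hpos
      (Pi.single_nonneg.mpr zero_le_one : 0 ≤ Pi.single ⟨i, hi⟩ 1)
    simpa [φ, Fintype.linearCombination_apply_single] using hnonneg
  · obtain ⟨a, -, rfl⟩ := mem_coneHull_iff.mp hz
    have hφ : φ (fun i ↦ a i) = ∑ i ∈ A, a i • v i := Finset.sum_coe_sort A fun i ↦ a i • v i
    rw [← hφ]
    exact hker (by simp [hφ, Submodule.mem_span_singleton_self])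
  · obtain ⟨i, -, hi⟩ := Finset.exists_ne_zero_of_sum_ne_zero hsum.ne'
    exact ⟨i, i.2, hi⟩

end VectorConfiguration

section ConfigurationFaces

variable {ι W : Type*} [AddCommGroup W] [Module ℝ W] {v : ι → W} {A B G : Finset ι} {x z : W}
  {l : Module.Dual ℝ W}

/-- `A` indexes a face of the subconfiguration of `v` indexed by `G`: its vectors are those on
which some linear functional, nonnegative on the subconfiguration, vanishes. -/
def IsConfigFace (v : ι → W) (G A : Finset ι) : Prop :=
  ∃ l : Module.Dual ℝ W, (∀ i ∈ G, 0 ≤ l (v i)) ∧ A = {i ∈ G | l (v i) = 0}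

lemma IsConfigFace.subset (h : IsConfigFace v G A) : A ⊆ G := by
  obtain ⟨l, -, rfl⟩ := h
  exact Finset.filter_subset _ _

lemma IsConfigFace.refl (v : ι → W) (G : Finset ι) : IsConfigFace v G G := ⟨0, by simp, by simp⟩

lemma IsConfigFace.trans (hA : IsConfigFace v G A) (hB : IsConfigFace v A B) :
    IsConfigFace v G B := by
  obtain ⟨l, hl, rfl⟩ := hA
  obtain ⟨m, hm, rfl⟩ := hB
  obtain ⟨ε, hε, hlt⟩ := exists_pos_forall_mul_lt (A := {i ∈ G | l (v i) ≠ 0})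
    (a := fun i ↦ l (v i)) (b := fun i ↦ -m (v i)) fun i hi ↦ by
      rw [Finset.mem_filter] at hi
      exact (hl i hi.1).lt_of_ne' hi.2
  have hpos : ∀ i ∈ G, l (v i) ≠ 0 → 0 < (l + ε • m) (v i) := fun i hi hne ↦ by
    have h := hlt i (Finset.mem_filter.mpr ⟨hi, hne⟩)
    simp only [LinearMap.add_apply, LinearMap.smul_apply, smul_eq_mul]
    linarith
  have hzero : ∀ i, l (v i) = 0 → (l + ε • m) (v i) = ε * m (v i) := fun i hi ↦ by simp [hi]
  refine ⟨l + ε • m, fun i hi ↦ ?_, ?_⟩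
  · by_cases h : l (v i) = 0
    · rw [hzero i h]
      exact mul_nonneg hε.le (hm i (Finset.mem_filter.mpr ⟨hi, h⟩))
    · exact (hpos i hi h).le
  · rw [Finset.filter_filter]
    refine Finset.filter_congr fun i hi ↦ ?_
    by_cases h : l (v i) = 0
    · rw [hzero i h, mul_eq_zero, or_iff_right hε.ne', and_iff_right h]
    · exact iff_of_false (fun h' ↦ h h'.1) (hpos i hi h).ne'

/-- The set of all faces of the subconfiguration of `v` indexed by `G`. -/
noncomputable def configFaces (v : ι → W) (G : Finset ι) : Finset (Finset ι) :=
  {A ∈ G.powerset | IsConfigFace v G A}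

lemma mem_configFaces : A ∈ configFaces v G ↔ IsConfigFace v G A := by
  rw [configFaces, Finset.mem_filter, Finset.mem_powerset]
  exact and_iff_right_of_imp IsConfigFace.subset

lemma configSpan_filter_le_ker (v : ι → W) (G : Finset ι) (l : Module.Dual ℝ W) :
    configSpan v {i ∈ G | l (v i) = 0} ≤ LinearMap.ker l :=
  configSpan_le_iff.mpr fun _ hi ↦ (Finset.mem_filter.mp hi).2

lemma mul_apply_eq_zero_of_apply_sum_eq_zero {a : ι → ℝ} (hl : ∀ i ∈ G, 0 ≤ l (v i))
    (ha : ∀ i ∈ G, 0 ≤ a i) (hsum : l (∑ i ∈ G, a i • v i) = 0) : ∀ i ∈ G, a i * l (v i) = 0 := by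
  simp only [map_sum, map_smul, smul_eq_mul] at hsum
  exact (Finset.sum_eq_zero_iff_of_nonneg fun i hi ↦ mul_nonneg (ha i hi) (hl i hi)).mp hsum

lemma mem_coneHull_filter_iff (hl : ∀ i ∈ G, 0 ≤ l (v i)) (hx : x ∈ coneHull v G) :
    x ∈ coneHull v {i ∈ G | l (v i) = 0} ↔ l x = 0 := by
  refine ⟨fun h ↦ configSpan_filter_le_ker v G l (coneHull_subset_configSpan h), fun hlx ↦ ?_⟩
  obtain ⟨a, ha, rfl⟩ := mem_coneHull_iff.mp hx
  refine mem_coneHull_iff.mpr ⟨a, fun i hi ↦ ha i (Finset.mem_filter.mp hi).1, ?_⟩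
  refine Finset.sum_filter_of_ne fun i hi hne ↦ ?_
  exact (mul_eq_zero.mp (mul_apply_eq_zero_of_apply_sum_eq_zero hl ha hlx i hi)).resolve_left
    (left_ne_zero_of_smul hne)

lemma subset_filter_of_mem_openConeHull (hl : ∀ i ∈ G, 0 ≤ l (v i)) (hx : x ∈ openConeHull v A)
    (hA : A ⊆ G) (hlx : l x = 0) : A ⊆ {i ∈ G | l (v i) = 0} := by
  obtain ⟨a, ha, rfl⟩ := hx
  intro i hi
  have hmul := mul_apply_eq_zero_of_apply_sum_eq_zero (fun i hi ↦ hl i (hA hi))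
    (fun i hi ↦ (ha i hi).le) hlx i hi
  exact Finset.mem_filter.mpr ⟨hA hi, (mul_eq_zero.mp hmul).resolve_left (ha i hi).ne'⟩

lemma IsConfigFace.subset_of_mem_openConeHull (hB : IsConfigFace v G B) (hA : A ⊆ G)
    (hxA : x ∈ openConeHull v A) (hxB : x ∈ openConeHull v B) : A ⊆ B := by
  obtain ⟨l, hl, rfl⟩ := hB
  exact subset_filter_of_mem_openConeHull hl hxA hA
    (configSpan_filter_le_ker v G l (openConeHull_subset_configSpan hxB))

lemma IsConfigFace.eq_of_mem_openConeHull (hA : IsConfigFace v G A) (hB : IsConfigFace v G B)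
    (hxA : x ∈ openConeHull v A) (hxB : x ∈ openConeHull v B) : A = B :=
  (hB.subset_of_mem_openConeHull hA.subset hxA hxB).antisymm
    (hA.subset_of_mem_openConeHull hB.subset hxB hxA)

lemma exists_isConfigFace_mem_openConeHull (hz : z ∈ coneHull v G) :
    ∃ A, IsConfigFace v G A ∧ z ∈ openConeHull v A := by
  induction G using Finset.strongInduction with
  | H G ih =>
    by_cases hpos : z ∈ openConeHull v G
    · exact ⟨G, .refl v G, hpos⟩
    obtain ⟨l, hl, hlz, i, hi, hli⟩ := exists_dual_of_notMem_openConeHull hz hpos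
    obtain ⟨A, hA, hzA⟩ := ih {i ∈ G | l (v i) = 0} (Finset.filter_ssubset.mpr ⟨i, hi, hli⟩)
      ((mem_coneHull_filter_iff hl hz).mpr hlz)
    exact ⟨A, IsConfigFace.trans ⟨l, hl, rfl⟩ hA, hzA⟩

end ConfigurationFaces

section PointedConfiguration

variable {ι W : Type*} [AddCommGroup W] [Module ℝ W] {v : ι → W} {A B G : Finset ι} {u x : W}
  {l : Module.Dual ℝ W}

lemma isClosed_setOf_linearMap_eq {κ : Type*} [Finite κ] (φ : (κ → ℝ) →ₗ[ℝ] W) (x : W) :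
    IsClosed {b | φ b = x} := by
  have hfiber : {b | φ b = x} = ⋂ m : Module.Dual ℝ W, {b | φ.dualMap m b = m x} := by
    ext b
    rw [Set.mem_iInter]
    refine ⟨fun h m ↦ congrArg m h, fun h ↦ Module.eval_apply_injective ℝ ?_⟩
    exact LinearMap.ext h
  rw [hfiber]
  exact isClosed_iInter fun m ↦
    isClosed_eq (φ.dualMap m).continuous_of_finiteDimensional continuous_const

lemma isCompact_setOf_nonneg_sum_smul_eq {κ : Type*} [Fintype κ] {w : κ → W}
    (hl : ∀ k, 0 < l (w k)) (x : W) :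
    IsCompact ({b : κ → ℝ | 0 ≤ b} ∩ {b | ∑ k, b k • w k = x}) := by
  refine (isCompact_Icc (a := (0 : κ → ℝ)) (b := fun k ↦ l x / l (w k))).of_isClosed_subset
    (isClosed_Ici.inter (isClosed_setOf_linearMap_eq (Fintype.linearCombination ℝ w) x)) ?_
  rintro b ⟨hb, rfl⟩
  refine ⟨hb, fun k ↦ ?_⟩
  rw [le_div_iff₀ (hl k), map_sum]
  simpa using Finset.single_le_sum (f := fun k ↦ b k * l (w k))
    (fun j _ ↦ mul_nonneg (hb j) (hl j).le) (Finset.mem_univ k)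

lemma isCompact_setOf_sub_smul_mem_coneHull (hl : ∀ i ∈ G, 0 < l (v i)) (hu : 0 < l u) (x : W) :
    IsCompact {s : ℝ | 0 ≤ s ∧ x - s • u ∈ coneHull v G} := by
  let w : Option G → W := fun o ↦ o.elim u fun i ↦ v i
  have hw (o : Option G) : 0 < l (w o) := by
    rcases o with _ | i
    exacts [hu, hl i i.2]
  convert (isCompact_setOf_nonneg_sum_smul_eq hw x).image (continuous_apply none) using 1
  ext s
  have hsum (a : G → ℝ) : ∑ i, a i • v i = x - s • u ↔ s • u + ∑ i, a i • v i = x :=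
    eq_sub_iff_add_eq'
  constructor
  · rintro ⟨hs, hmem⟩
    obtain ⟨a, ha, hax⟩ := mem_coneHull_iff_exists_coe.mp hmem
    refine ⟨fun o ↦ o.elim s a, ⟨?_, ?_⟩, rfl⟩
    · rintro (_ | i)
      exacts [hs, ha i]
    · exact (Fintype.sum_option _).trans ((hsum a).mp hax)
  · rintro ⟨b, ⟨hb, hbx⟩, rfl⟩
    refine ⟨hb none, mem_coneHull_iff_exists_coe.mpr ⟨fun i ↦ b (some i), fun i ↦ hb (some i), ?_⟩⟩
    exact (hsum _).mpr ((Fintype.sum_option fun o ↦ b o • w o).symm.trans hbx)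

lemma exists_isGreatest_sub_smul_mem_coneHull (hl : ∀ i ∈ G, 0 < l (v i)) (hu : 0 < l u)
    (hx : x ∈ coneHull v G) : ∃ s, IsGreatest {s : ℝ | x - s • u ∈ coneHull v G} s := by
  obtain ⟨s, ⟨hs, hmem⟩, hmax⟩ := (isCompact_setOf_sub_smul_mem_coneHull hl hu x).exists_isGreatest
    ⟨0, le_rfl, by simpa using hx⟩
  exact ⟨s, hmem, fun t ht ↦ (le_total 0 t).elim (fun h ↦ hmax ⟨h, ht⟩) fun h ↦ h.trans hs⟩

lemma exists_sub_smul_mem_coneHull_notMem_openConeHull (hl : ∀ i ∈ G, 0 < l (v i))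
    (hu : 0 < l u) (huG : u ∈ configSpan v G) (hx : x ∈ openConeHull v G) :
    ∃ s : ℝ, 0 < s ∧ x - s • u ∈ coneHull v G ∧ x - s • u ∉ openConeHull v G := by
  obtain ⟨s, hs, hmax⟩ :=
    exists_isGreatest_sub_smul_mem_coneHull hl hu (openConeHull_subset_coneHull hx)
  refine ⟨s, ?_, hs, fun hpos ↦ ?_⟩
  · obtain ⟨ε, hε, hmem⟩ := exists_sub_smul_mem_openConeHull hx huG
    exact hε.trans_le (hmax (openConeHull_subset_coneHull hmem))
  · obtain ⟨ε, hε, hmem⟩ := exists_sub_smul_mem_openConeHull hpos huG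
    rw [sub_sub, ← add_smul] at hmem
    exact (lt_add_of_pos_right s hε).not_ge (hmax (openConeHull_subset_coneHull hmem))

/-- The positive combinations of `u` and the vectors `v i`, `i ∈ A`: the part of space shaded by
`openConeHull v A` from a light shining in direction `u`. -/
def shadow (v : ι → W) (u : W) (A : Finset ι) : Set W :=
  openConeHull (fun o : Option ι ↦ o.elim u v) (Finset.insertNone A)

lemma mem_shadow_iff : x ∈ shadow v u A ↔ ∃ s : ℝ, 0 < s ∧ x - s • u ∈ openConeHull v A := by
  constructor
  · rintro ⟨a, ha, rfl⟩
    refine ⟨a none, ha _ (by simp), fun i ↦ a (some i), fun i hi ↦ ha _ (by simpa using hi), ?_⟩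
    simp [Finset.sum_insertNone]
  · rintro ⟨s, hs, a, ha, hsum⟩
    refine ⟨fun o ↦ o.elim s a, ?_, ?_⟩
    · rintro (_ | i) hi
      exacts [hs, ha i (by simpa using hi)]
    · simp [Finset.sum_insertNone, hsum]

lemma apply_sum_pos_of_filter_ne (hl : ∀ i ∈ G, 0 ≤ l (v i)) (hne : {i ∈ G | l (v i) = 0} ≠ G) :
    0 < l (∑ i ∈ G, v i) := by
  rw [map_sum]
  refine (Finset.sum_nonneg hl).lt_of_ne' fun hsum ↦ hne (Finset.filter_true_of_mem ?_)
  exact (Finset.sum_eq_zero_iff_of_nonneg hl).mp hsum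

lemma finrank_configSpan_insertNone (hA : configSpan v A ≤ LinearMap.ker l) (hu : l u ≠ 0) :
    Module.finrank ℝ (configSpan (fun o : Option ι ↦ o.elim u v) (Finset.insertNone A)) =
      Module.finrank ℝ (configSpan v A) + 1 := by
  have hinf : configSpan (fun o : Option ι ↦ o.elim u v) (Finset.insertNone A) ⊓
      LinearMap.ker l = configSpan v A := by
    apply le_antisymm
    · rintro x ⟨hx, hlx : l x = 0⟩
      obtain ⟨a, rfl⟩ := mem_configSpan_iff.mp hx
      rw [Finset.sum_insertNone] at hlx ⊢
      have hsum : ∑ i ∈ A, a (some i) • v i ∈ configSpan v A :=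
        mem_configSpan_iff.mpr ⟨fun i ↦ a (some i), rfl⟩
      have hlsum : l (∑ i ∈ A, a (some i) • v i) = 0 := hA hsum
      have hnone : a none = 0 := by simpa [hlsum, hu] using hlx
      simpa [hnone] using hsum
    · refine le_inf (configSpan_le_iff.mpr fun i hi ↦ ?_) hA
      exact Submodule.subset_span ⟨some i, by simpa using hi, rfl⟩
  have hmem : u ∈ configSpan (fun o : Option ι ↦ o.elim u v) (Finset.insertNone A) :=
    Submodule.subset_span ⟨none, by simp⟩
  rw [← finrank_inf_ker_add_one _ ⟨u, hmem, hu⟩, hinf]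

lemma IsConfigFace.eulerChar_shadow (hA : IsConfigFace v G A) (hne : A ≠ G) :
    eulerChar (shadow v (∑ i ∈ G, v i) A) = -(-1) ^ Module.finrank ℝ (configSpan v A) := by
  obtain ⟨l, hl, rfl⟩ := hA
  rw [shadow, eulerChar_openConeHull, finrank_configSpan_insertNone
    (configSpan_filter_le_ker v G l) (apply_sum_pos_of_filter_ne hl hne).ne', pow_succ, mul_neg_one]

lemma shadow_subset_openConeHull (hA : A ⊆ G) (hu : u ∈ openConeHull v G) :
    shadow v u A ⊆ openConeHull v G := by
  intro x hx
  obtain ⟨s, hs, hmem⟩ := mem_shadow_iff.mp hx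
  simpa using add_mem_openConeHull (coneHull_mono hA (openConeHull_subset_coneHull hmem))
    (smul_mem_openConeHull hs hu)

lemma IsConfigFace.eq_of_lt {s t : ℝ} (hA : IsConfigFace v G A) (hB : B ⊆ G)
    (hu : u ∈ openConeHull v G) (hxA : x - s • u ∈ openConeHull v A)
    (hxB : x - t • u ∈ openConeHull v B) (hst : s < t) : A = G := by
  refine hA.eq_of_mem_openConeHull (.refl v G) hxA ?_
  have hadd := add_mem_openConeHull (coneHull_mono hB (openConeHull_subset_coneHull hxB))
    (smul_mem_openConeHull (sub_pos.mpr hst) hu)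
  rwa [show x - s • u = x - t • u + (t - s) • u by module]

lemma pairwiseDisjoint_shadow (hu : u ∈ openConeHull v G) :
    ((configFaces v G).erase G : Set (Finset ι)).PairwiseDisjoint (shadow v u) := by
  intro A hA B hB hAB
  rw [Finset.mem_coe, Finset.mem_erase, mem_configFaces] at hA hB
  refine Set.disjoint_left.mpr fun x hxA hxB ↦ hAB ?_
  obtain ⟨s, -, hxA⟩ := mem_shadow_iff.mp hxA
  obtain ⟨t, -, hxB⟩ := mem_shadow_iff.mp hxB
  rcases lt_trichotomy s t with hst | rfl | hst
  · exact (hA.1 (hA.2.eq_of_lt hB.2.subset hu hxA hxB hst)).elim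
  · exact hA.2.eq_of_mem_openConeHull hB.2 hxA hxB
  · exact (hB.1 (hB.2.eq_of_lt hA.2.subset hu hxB hxA hst)).elim

lemma biUnion_shadow (hl : ∀ i ∈ G, 0 < l (v i)) (hlu : 0 < l u) (hu : u ∈ openConeHull v G) :
    ⋃ A ∈ (configFaces v G).erase G, shadow v u A = openConeHull v G := by
  refine (Set.iUnion₂_subset fun A hA ↦ shadow_subset_openConeHull
    (mem_configFaces.mp (Finset.mem_of_mem_erase hA)).subset hu).antisymm fun x hx ↦ ?_
  obtain ⟨s, hs, hmem, hnot⟩ := exists_sub_smul_mem_coneHull_notMem_openConeHull hl hlu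
    (openConeHull_subset_configSpan hu) hx
  obtain ⟨A, hA, hxA⟩ := exists_isConfigFace_mem_openConeHull hmem
  have hne : A ≠ G := by
    rintro rfl
    exact hnot hxA
  exact Set.mem_biUnion (Finset.mem_erase.mpr ⟨hne, mem_configFaces.mpr hA⟩)
    (mem_shadow_iff.mpr ⟨s, hs, hxA⟩)

/-- Moving in direction `-∑ i ∈ G, v i`, every point of the relative interior leaves the cone
through exactly one proper face, so the shadows of the proper faces partition it. -/
theorem sum_configFaces_neg_one_pow_finrank (hG : G.Nonempty) (hl : ∀ i ∈ G, 0 < l (v i)) :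
    ∑ A ∈ configFaces v G, (-1 : ℤ) ^ Module.finrank ℝ (configSpan v A) = 0 := by
  have hu := sum_mem_openConeHull v G
  have hlu : 0 < l (∑ i ∈ G, v i) := by
    rw [map_sum]
    exact Finset.sum_pos hl hG
  have heuler := eulerChar_eq_sum (C := shadow v (∑ i ∈ G, v i))
    (fun _ _ ↦ isRelOpenConvex_openConeHull) isRelOpenConvex_openConeHull
    openConeHull_subset_configSpan (pairwiseDisjoint_shadow hu) (biUnion_shadow hl hlu hu)
  have hshadow : ∀ A ∈ (configFaces v G).erase G, eulerChar (shadow v (∑ i ∈ G, v i) A) =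
      -(-1) ^ Module.finrank ℝ (configSpan v A) := fun A hA ↦ by
    rw [Finset.mem_erase, mem_configFaces] at hA
    exact hA.2.eulerChar_shadow hA.1
  rw [Finset.sum_congr rfl hshadow, eulerChar_openConeHull, Finset.sum_neg_distrib] at heuler
  rw [← Finset.add_sum_erase _ _ (mem_configFaces.mpr (.refl v G)), heuler, neg_add_cancel]

end PointedConfiguration

section Contraction

variable {ι W : Type*} [AddCommGroup W] [Module ℝ W] {v : ι → W} {A F G S : Finset ι}

lemma configSpan_union (v : ι → W) (A F : Finset ι) :
    configSpan v (A ∪ F) = configSpan v A ⊔ configSpan v F := by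
  rw [configSpan, Finset.coe_union, Set.image_union, Submodule.span_union]
  rfl

/-- The contraction of the configuration `v` at `F`: its image modulo the span of `F`. -/
def contraction (v : ι → W) (F : Finset ι) (i : ι) : W ⧸ configSpan v F :=
  (configSpan v F).mkQ (v i)

lemma contraction_of_mem {i : ι} (hi : i ∈ F) : contraction v F i = 0 :=
  (Submodule.Quotient.mk_eq_zero _).mpr (mem_configSpan_of_mem hi)

lemma configSpan_contraction (v : ι → W) (F A : Finset ι) :
    configSpan (contraction v F) A = (configSpan v A).map (configSpan v F).mkQ := by
  change _ = (Submodule.span ℝ (v '' A)).map _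
  rw [Submodule.map_span, Set.image_image]
  rfl

lemma finrank_configSpan_contraction_add (v : ι → W) (F A : Finset ι) :
    Module.finrank ℝ (configSpan (contraction v F) A) + Module.finrank ℝ (configSpan v F) =
      Module.finrank ℝ (configSpan v (A ∪ F)) := by
  have hle : configSpan v F ≤ configSpan v (A ∪ F) := by
    rw [configSpan_union]
    exact le_sup_right
  have hmap : configSpan (contraction v F) A =
      (configSpan v (A ∪ F)).map (configSpan v F).mkQ := by
    rw [configSpan_contraction, configSpan_union, Submodule.map_sup, Submodule.mkQ_map_self,
      sup_bot_eq]
  rw [hmap, ← LinearMap.finrank_range_add_finrank_ker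
    ((configSpan v F).mkQ.domRestrict (configSpan v (A ∪ F))), LinearMap.range_domRestrict,
    LinearMap.ker_domRestrict, Submodule.ker_mkQ,
    (Submodule.comapSubtypeEquivOfLe hle).finrank_eq]

lemma isConfigFace_contraction_iff (hF : F ⊆ G) (hA : A ⊆ G \ F) :
    IsConfigFace (contraction v F) (G \ F) A ↔ IsConfigFace v G (A ∪ F) := by
  constructor
  · rintro ⟨l, hl, rfl⟩
    refine ⟨l ∘ₗ (configSpan v F).mkQ, fun i hi ↦ ?_, ?_⟩
    · change 0 ≤ l (contraction v F i)
      by_cases hiF : i ∈ F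
      · rw [contraction_of_mem hiF, map_zero]
      · exact hl i (Finset.mem_sdiff.mpr ⟨hi, hiF⟩)
    · ext i
      change _ ↔ i ∈ Finset.filter (fun i ↦ l (contraction v F i) = 0) G
      by_cases hiF : i ∈ F
      · simp [hiF, hF hiF, contraction_of_mem hiF]
      · simp [hiF]
  · rintro ⟨l, hl, hunion⟩
    have hker : configSpan v F ≤ LinearMap.ker l := by
      refine le_trans ?_ (configSpan_filter_le_ker v G l)
      rw [← hunion, configSpan_union]
      exact le_sup_right
    refine ⟨(configSpan v F).liftQ l hker, fun i hi ↦ hl i (Finset.mem_sdiff.mp hi).1, ?_⟩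
    change A = Finset.filter (fun i ↦ l (v i) = 0) (G \ F)
    rw [← Finset.union_sdiff_cancel_right (Finset.subset_sdiff.mp hA).2, hunion]
    ext i
    simp only [Finset.mem_sdiff, Finset.mem_filter]
    exact and_right_comm

lemma sum_configFaces_contraction (hF : F ⊆ G) :
    (∑ A ∈ configFaces (contraction v F) (G \ F),
        (-1 : ℤ) ^ Module.finrank ℝ (configSpan (contraction v F) A)) *
      (-1) ^ Module.finrank ℝ (configSpan v F) =
    ∑ H ∈ configFaces v G with F ⊆ H, (-1) ^ Module.finrank ℝ (configSpan v H) := by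
  rw [Finset.sum_mul]
  refine Finset.sum_bij' (fun A _ ↦ A ∪ F) (fun H _ ↦ H \ F) (fun A hA ↦ ?_) (fun H hH ↦ ?_)
    (fun A hA ↦ ?_) (fun H hH ↦ ?_) fun A _ ↦ ?_
  · rw [mem_configFaces] at hA
    rw [Finset.mem_filter, mem_configFaces]
    exact ⟨(isConfigFace_contraction_iff hF hA.subset).mp hA, Finset.subset_union_right⟩
  · rw [Finset.mem_filter, mem_configFaces] at hH
    rw [mem_configFaces, isConfigFace_contraction_iff hF
      (Finset.sdiff_subset_sdiff hH.1.subset subset_rfl), Finset.sdiff_union_of_subset hH.2]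
    exact hH.1
  · rw [mem_configFaces] at hA
    exact Finset.union_sdiff_cancel_right (Finset.subset_sdiff.mp hA.subset).2
  · exact Finset.sdiff_union_of_subset (Finset.mem_filter.mp hH).2
  · rw [← pow_add, finrank_configSpan_contraction_add]

theorem IsConfigFace.sum_neg_one_pow_finrank (hF : IsConfigFace v G F) (hFG : F ≠ G) :
    ∑ H ∈ configFaces v G with F ⊆ H, (-1 : ℤ) ^ Module.finrank ℝ (configSpan v H) = 0 := by
  rw [← sum_configFaces_contraction hF.subset]
  have hne : (G \ F).Nonempty :=
    Finset.sdiff_nonempty.mpr fun h ↦ hFG (hF.subset.antisymm h)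
  obtain ⟨l, hl, rfl⟩ := hF
  rw [sum_configFaces_neg_one_pow_finrank (l := (configSpan v _).liftQ l
    (configSpan_filter_le_ker v G l)) hne, zero_mul]
  intro i hi
  rw [Finset.mem_sdiff, Finset.mem_filter, not_and] at hi
  exact (hl i hi.1).lt_of_ne' (hi.2 hi.1)

lemma IsConfigFace.isConfigFace_iff (hG : IsConfigFace v S G) :
    IsConfigFace v G A ↔ IsConfigFace v S A ∧ A ⊆ G := by
  refine ⟨fun hA ↦ ⟨hG.trans hA, hA.subset⟩, ?_⟩
  rintro ⟨⟨l, hl, rfl⟩, hAG⟩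
  refine ⟨l, fun i hi ↦ hl i (hG.subset hi), ?_⟩
  ext i
  simp only [Finset.mem_filter]
  exact ⟨fun hi ↦ ⟨hAG (Finset.mem_filter.mpr hi), hi.2⟩, fun hi ↦ ⟨hG.subset hi.1, hi.2⟩⟩

lemma IsConfigFace.finrank_configSpan_lt (hA : IsConfigFace v S A) (hAG : A ⊂ G) (hG : G ⊆ S) :
    Module.finrank ℝ (configSpan v A) < Module.finrank ℝ (configSpan v G) := by
  obtain ⟨l, -, rfl⟩ := hA
  obtain ⟨i, hiG, hi⟩ := Finset.exists_of_ssubset hAG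
  have hle : configSpan v {i ∈ S | l (v i) = 0} ≤ configSpan v G :=
    Submodule.span_mono (Set.image_mono (Finset.coe_subset.mpr hAG.subset))
  refine Submodule.finrank_lt_finrank_of_lt (hle.lt_of_not_ge fun h ↦ hi ?_)
  exact Finset.mem_filter.mpr
    ⟨hG hiG, configSpan_filter_le_ker v S l (h (mem_configSpan_of_mem hiG))⟩

end Contraction

section Homogenization

variable {V : Type*} [AddCommGroup V] [Module ℝ V] {A B S : Finset V} {x : V} {l : Module.Dual ℝ V}
  {c : ℝ}

/-- The embedding of `V` as the affine hyperplane at height one, which turns a polytope into a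
cone and affine functions into linear functionals. -/
def homogenize (x : V) : V × ℝ := (x, 1)

lemma sum_smul_homogenize (A : Finset V) (a : V → ℝ) :
    ∑ i ∈ A, a i • homogenize i = (∑ i ∈ A, a i • i, ∑ i ∈ A, a i) := by
  ext <;> simp [homogenize, Prod.fst_sum, Prod.snd_sum]

lemma homogenize_mem_coneHull_iff :
    homogenize x ∈ coneHull homogenize A ↔ x ∈ convexHull ℝ (A : Set V) := by
  simp only [mem_coneHull_iff, Finset.mem_convexHull', sum_smul_homogenize]
  simp only [homogenize, Prod.mk.injEq]
  exact exists_congr fun a ↦ and_congr_right fun _ ↦ and_comm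

lemma isConfigFace_homogenize_iff : IsConfigFace homogenize S A ↔
    ∃ (l : Module.Dual ℝ V) (c : ℝ), (∀ i ∈ S, l i ≤ c) ∧ A = {i ∈ S | l i = c} := by
  constructor
  · rintro ⟨L, hL, rfl⟩
    have hsplit (x : V) : L (homogenize x) = L (0, 1) - (-(L ∘ₗ LinearMap.inl ℝ V ℝ)) x := by
      simp [homogenize, ← map_add]
    simp only [hsplit, sub_nonneg, sub_eq_zero] at hL ⊢
    exact ⟨_, _, hL, Finset.filter_congr fun _ _ ↦ eq_comm⟩
  · rintro ⟨l, c, hl, rfl⟩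
    refine ⟨c • LinearMap.snd ℝ V ℝ - l ∘ₗ LinearMap.fst ℝ V ℝ, ?_, ?_⟩
    · simpa [homogenize] using hl
    · simp [homogenize, sub_eq_zero, eq_comm (a := c)]

lemma isConfigFace_homogenize_empty (S : Finset V) : IsConfigFace homogenize S ∅ :=
  isConfigFace_homogenize_iff.mpr ⟨0, 1, by simp, by simp⟩

lemma le_of_mem_convexHull (hl : ∀ i ∈ S, l i ≤ c) (hx : x ∈ convexHull ℝ (S : Set V)) :
    l x ≤ c :=
  convexHull_min (t := {x | l x ≤ c}) hl (convex_halfSpace_le l.isLinear c) hx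

lemma mem_convexHull_filter_iff (hl : ∀ i ∈ S, l i ≤ c) (hx : x ∈ convexHull ℝ (S : Set V)) :
    x ∈ convexHull ℝ ({i ∈ S | l i = c} : Finset V) ↔ l x = c := by
  have hL (x : V) : (c • LinearMap.snd ℝ V ℝ - l ∘ₗ LinearMap.fst ℝ V ℝ) (homogenize x) =
      c - l x := by simp [homogenize]
  have h := mem_coneHull_filter_iff (v := homogenize) (G := S)
    (l := c • LinearMap.snd ℝ V ℝ - l ∘ₗ LinearMap.fst ℝ V ℝ)
    (fun i hi ↦ (hL i).symm ▸ sub_nonneg.mpr (hl i hi)) (homogenize_mem_coneHull_iff.mpr hx)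
  simpa only [hL, sub_eq_zero, eq_comm (a := c), homogenize_mem_coneHull_iff] using h

lemma setOf_forall_le_eq_convexHull_filter (hl : ∀ i ∈ S, l i ≤ c)
    (hc : ∃ x ∈ convexHull ℝ (S : Set V), l x = c) :
    {x | x ∈ convexHull ℝ (S : Set V) ∧ ∀ y ∈ convexHull ℝ (S : Set V), l y ≤ l x} =
      convexHull ℝ ({i ∈ S | l i = c} : Finset V) := by
  obtain ⟨x₀, hx₀, rfl⟩ := hc
  ext x
  constructor
  · rintro ⟨hx, hmax⟩
    exact (mem_convexHull_filter_iff hl hx).mpr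
      ((le_of_mem_convexHull hl hx).antisymm (hmax x₀ hx₀))
  · intro hx
    have hxS : x ∈ convexHull ℝ (S : Set V) :=
      convexHull_mono (Finset.coe_subset.mpr (Finset.filter_subset _ _)) hx
    rw [mem_convexHull_filter_iff hl hxS] at hx
    exact ⟨hxS, fun y hy ↦ hx ▸ le_of_mem_convexHull hl hy⟩

lemma isFace_convexHull_iff {F : Set V} : IsFace (convexHull ℝ (S : Set V)) F ↔
    ∃ A, IsConfigFace homogenize S A ∧ F = convexHull ℝ (A : Set V) := by
  constructor
  · rintro (rfl | rfl | ⟨l, hF⟩)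
    · exact ⟨S, .refl _ S, rfl⟩
    · exact ⟨∅, isConfigFace_homogenize_empty S, by simp⟩
    · rcases F.eq_empty_or_nonempty with rfl | ⟨x₀, hx₀⟩
      · exact ⟨∅, isConfigFace_homogenize_empty S, by simp⟩
      obtain ⟨hx₀S, hmax⟩ := hF.subset hx₀
      have hl : ∀ i ∈ S, l i ≤ l x₀ := fun i hi ↦ hmax i (subset_convexHull ℝ _ hi)
      exact ⟨_, isConfigFace_homogenize_iff.mpr ⟨l, l x₀, hl, rfl⟩,
        hF.trans (setOf_forall_le_eq_convexHull_filter hl ⟨x₀, hx₀S, rfl⟩)⟩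
  · rintro ⟨A, hA, rfl⟩
    rcases A.eq_empty_or_nonempty with rfl | ⟨a, ha⟩
    · exact .inr (.inl (by simp))
    obtain ⟨l, c, hl, rfl⟩ := isConfigFace_homogenize_iff.mp hA
    obtain ⟨haS, hac⟩ := Finset.mem_filter.mp ha
    exact .inr (.inr ⟨l, (setOf_forall_le_eq_convexHull_filter hl
      ⟨a, subset_convexHull ℝ _ haS, hac⟩).symm⟩)

lemma IsConfigFace.convexHull_subset_iff (hB : IsConfigFace homogenize S B) (hA : A ⊆ S) :
    convexHull ℝ (A : Set V) ⊆ convexHull ℝ (B : Set V) ↔ A ⊆ B := by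
  refine ⟨fun h i hi ↦ ?_, fun h ↦ convexHull_mono (Finset.coe_subset.mpr h)⟩
  obtain ⟨l, c, hl, rfl⟩ := isConfigFace_homogenize_iff.mp hB
  exact Finset.mem_filter.mpr ⟨hA hi, (mem_convexHull_filter_iff hl
    (subset_convexHull ℝ _ (hA hi))).mp (h (subset_convexHull ℝ _ hi))⟩

lemma sum_smul_mem_vectorSpan {a : V → ℝ} (ha : ∑ i ∈ A, a i = 0) :
    ∑ i ∈ A, a i • i ∈ vectorSpan ℝ (A : Set V) := by
  rw [← Finset.sum_attach] at ha ⊢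
  have hmem := weightedVSub_mem_vectorSpan ha ((↑) : A → V)
  rwa [Finset.weightedVSub_eq_linear_combination _ ha, Subtype.range_coe] at hmem

lemma configSpan_homogenize_inf_ker_snd (A : Finset V) :
    configSpan homogenize A ⊓ LinearMap.ker (LinearMap.snd ℝ V ℝ) =
      (vectorSpan ℝ (A : Set V)).map (LinearMap.inl ℝ V ℝ) := by
  apply le_antisymm
  · rintro x ⟨hx, hx0⟩
    obtain ⟨a, rfl⟩ := mem_configSpan_iff.mp hx
    rw [sum_smul_homogenize] at hx0 ⊢
    have hsum : ∑ i ∈ A, a i = 0 := hx0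
    rw [hsum]
    exact ⟨_, sum_smul_mem_vectorSpan hsum, rfl⟩
  · rw [Submodule.map_le_iff_le_comap, vectorSpan, Submodule.span_le]
    rintro _ ⟨x, hx, y, hy, rfl⟩
    have hsub : LinearMap.inl ℝ V ℝ (x - y) = homogenize x - homogenize y := by simp [homogenize]
    refine ⟨?_, by simp⟩
    change LinearMap.inl ℝ V ℝ (x - y) ∈ configSpan homogenize A
    rw [hsub]
    exact Submodule.sub_mem _ (mem_configSpan_of_mem hx) (mem_configSpan_of_mem hy)

lemma pdim_convexHull (A : Finset V) : pdim (convexHull ℝ (A : Set V)) =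
    (Module.finrank ℝ (configSpan homogenize A) : ℤ) - 1 := by
  rcases A.eq_empty_or_nonempty with rfl | ⟨p, hp⟩
  · have hbot : configSpan homogenize (∅ : Finset V) = ⊥ := by simp [configSpan]
    rw [hbot, finrank_bot]
    simp [pdim]
  · have hne : convexHull ℝ (A : Set V) ≠ ∅ :=
      Set.Nonempty.ne_empty ⟨p, subset_convexHull ℝ _ hp⟩
    rw [pdim, if_neg hne, affineSpan_convexHull, direction_affineSpan,
      ← finrank_inf_ker_add_one (configSpan homogenize A) (l := LinearMap.snd ℝ V ℝ)
        ⟨homogenize p, mem_configSpan_of_mem hp, one_ne_zero⟩,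
      configSpan_homogenize_inf_ker_snd,
      ← (Submodule.equivMapOfInjective _ LinearMap.inl_injective _).finrank_eq]
    simp

end Homogenization

section FaceLattice

variable {V : Type*} [AddCommGroup V] [Module ℝ V] {S : Finset V}

lemma coeff_truncG (d : ℤ) (h : ℚ[X]) (j : ℕ) : (truncG d h).coeff j =
    if j ≤ d.toNat / 2 then -((X - 1) * h).coeff j else 0 := by
  simp only [truncG, finsetSum_coeff, coeff_C_mul_X_pow, Finset.sum_ite_eq, Finset.mem_range,
    Nat.lt_succ_iff]
  refine if_congr Iff.rfl ?_ rfl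
  cases j <;> simp [sub_mul]

lemma relHAux_self (n : ℕ) (F : Set V) : relHAux n F F = 1 := by cases n <;> simp [relHAux]

lemma relG_self (F : Set V) : relG F F = 1 := by
  ext j
  rw [relG, relH, relHAux_self, coeff_truncG]
  rcases j with _ | j <;> simp [coeff_one, coeff_X]

/-- The face lattice of the polytope `convexHull ℝ S`, a face being encoded by the points of `S`
that lie on it. -/
abbrev FaceLattice (S : Finset V) : Type _ := {A : Finset V // IsConfigFace homogenize S A}

namespace FaceLattice

noncomputable instance : Fintype (FaceLattice S) :=
  Fintype.subtype (configFaces homogenize S) fun _ ↦ mem_configFaces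

noncomputable instance : LocallyFiniteOrder (FaceLattice S) := Fintype.toLocallyFiniteOrder

instance : BoundedOrder (FaceLattice S) where
  bot := ⟨∅, isConfigFace_homogenize_empty S⟩
  bot_le A := Finset.empty_subset A.1
  top := ⟨S, .refl homogenize S⟩
  le_top A := A.2.subset

/-- The face as a subset of the ambient space. -/
def toSet (A : FaceLattice S) : Set V := convexHull ℝ (A.1 : Set V)

/-- The rank of a face is one more than its dimension. -/
noncomputable def rank (A : FaceLattice S) : ℕ := Module.finrank ℝ (configSpan homogenize A.1)

variable {A B : FaceLattice S}

lemma toSet_subset_toSet : A.toSet ⊆ B.toSet ↔ A ≤ B := B.2.convexHull_subset_iff A.2.subset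

lemma toSet_injective : Function.Injective (toSet (S := S)) := fun _ _ h ↦
  (toSet_subset_toSet.mp h.subset).antisymm (toSet_subset_toSet.mp h.symm.subset)

lemma toSet_bot : (⊥ : FaceLattice S).toSet = ∅ := by
  change convexHull ℝ ((∅ : Finset V) : Set V) = ∅
  simp

lemma isFace_toSet_iff {F : Set V} : IsFace A.toSet F ↔ ∃ B ≤ A, F = B.toSet := by
  rw [toSet, isFace_convexHull_iff]
  constructor
  · rintro ⟨B, hB, rfl⟩
    exact ⟨⟨B, A.2.trans hB⟩, hB.subset, rfl⟩
  · rintro ⟨B, hBA, rfl⟩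
    exact ⟨B.1, A.2.isConfigFace_iff.mpr ⟨B.2, hBA⟩, rfl⟩

lemma pdim_toSet (A : FaceLattice S) : pdim A.toSet = (A.rank : ℤ) - 1 := pdim_convexHull A.1

lemma toNat_pdim_toSet_add_one (A : FaceLattice S) : (pdim A.toSet + 1).toNat = A.rank := by
  rw [pdim_toSet, sub_add_cancel, Int.toNat_natCast]

lemma rank_bot : (⊥ : FaceLattice S).rank = 0 := by
  rw [← toNat_pdim_toSet_add_one, toSet_bot, pdim, if_pos rfl]
  rfl

lemma rank_strictMono : StrictMono (rank (S := S)) := fun A B hAB ↦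
  A.2.finrank_configSpan_lt hAB B.2.subset

lemma map_Icc (A B : FaceLattice S) : (Finset.Icc A B).map (Function.Embedding.subtype _) =
    {H ∈ configFaces homogenize B.1 | A.1 ⊆ H} := by
  ext H
  simp only [Finset.mem_map, Finset.mem_Icc, Finset.mem_filter, mem_configFaces,
    B.2.isConfigFace_iff]
  constructor
  · rintro ⟨C, ⟨hAC, hCB⟩, rfl⟩
    exact ⟨⟨C.2, hCB⟩, hAC⟩
  · rintro ⟨⟨hH, hHB⟩, hAH⟩
    exact ⟨⟨H, hH⟩, ⟨hAH, hHB⟩, rfl⟩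

theorem isEulerianRank_rank : IsEulerianRank (rank (S := S)) where
  strictMono := rank_strictMono
  sum_Icc A B hAB := by
    have hA : IsConfigFace homogenize B.1 A.1 := B.2.isConfigFace_iff.mpr ⟨A.2, hAB.le⟩
    have hsum := hA.sum_neg_one_pow_finrank (Subtype.coe_ne_coe.mpr hAB.ne)
    rwa [← map_Icc, Finset.sum_map] at hsum

lemma setOf_isFace_eq_image_Ico (A B : FaceLattice S) :
    {F | IsFace B.toSet F ∧ A.toSet ⊆ F ∧ F ≠ B.toSet} =
      toSet '' (Finset.Ico A B : Set (FaceLattice S)) := by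
  ext F
  simp only [Set.mem_ofPred_eq, isFace_toSet_iff, Set.mem_image, Finset.coe_Ico, Set.mem_Ico]
  constructor
  · rintro ⟨⟨C, hCB, rfl⟩, hAC, hne⟩
    exact ⟨C, ⟨toSet_subset_toSet.mp hAC, hCB.lt_of_ne (ne_of_apply_ne toSet hne)⟩, rfl⟩
  · rintro ⟨C, ⟨hAC, hCB⟩, rfl⟩
    exact ⟨⟨C, hCB.le, rfl⟩, toSet_subset_toSet.mpr hAC, toSet_injective.ne hCB.ne⟩

lemma finsum_mem_isFace_pdim_eq {M : Type*} [AddCommMonoid M] (S : Finset V) (d : ℕ)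
    (f : Set V → M) :
    ∑ᶠ F ∈ {F | IsFace (convexHull ℝ (S : Set V)) F ∧ pdim F = d}, f F =
      ∑ A : FaceLattice S with A.rank = d + 1, f A.toSet := by
  have hrank (A : FaceLattice S) : pdim A.toSet = d ↔ A.rank = d + 1 := by
    rw [pdim_toSet]
    lia
  have himage : {F | IsFace (convexHull ℝ (S : Set V)) F ∧ pdim F = d} =
      toSet '' {A : FaceLattice S | A.rank = d + 1} := by
    ext F
    change IsFace (⊤ : FaceLattice S).toSet F ∧ pdim F = d ↔ _
    simp only [isFace_toSet_iff, le_top, true_and, Set.mem_image, Set.mem_ofPred_eq]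
    constructor
    · rintro ⟨⟨A, rfl⟩, hdim⟩
      exact ⟨A, (hrank A).mp hdim, rfl⟩
    · rintro ⟨A, hA, rfl⟩
      exact ⟨⟨A, rfl⟩, (hrank A).mpr hA⟩
  rw [himage, finsum_mem_image toSet_injective.injOn]
  exact finsum_cond_eq_sum_of_cond_iff _ (by simp)

lemma relHAux_succ (n : ℕ) (hAB : A < B) : relHAux (n + 1) A.toSet B.toSet =
    ∑ C ∈ Finset.Ico A B, truncG (pdim C.toSet - pdim A.toSet - 1) (relHAux n A.toSet C.toSet) *
      (X - 1) ^ (B.rank - C.rank - 1) := by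
  rw [relHAux, if_neg (toSet_injective.ne hAB.ne'), setOf_isFace_eq_image_Ico,
    finsum_mem_image toSet_injective.injOn, finsum_mem_coe_finset]
  refine Finset.sum_congr rfl fun C _ ↦ ?_
  have hexp : (pdim B.toSet - pdim C.toSet - 1).toNat = B.rank - C.rank - 1 := by
    rw [pdim_toSet, pdim_toSet]
    lia
  rw [hexp]

lemma relHAux_congr (hAB : A ≤ B) {m n : ℕ} (hm : B.rank ≤ m) (hn : B.rank ≤ n) :
    relHAux m A.toSet B.toSet = relHAux n A.toSet B.toSet := by
  induction m generalizing n B with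
  | zero =>
    have hBA : ¬A < B := fun h ↦ by
      have := rank_strictMono h
      lia
    rw [hAB.eq_of_not_lt hBA, relHAux_self, relHAux_self]
  | succ m ih =>
    rcases hAB.eq_or_lt with rfl | hlt
    · rw [relHAux_self, relHAux_self]
    have hrank := rank_strictMono hlt
    obtain ⟨n, rfl⟩ := Nat.exists_eq_add_one_of_ne_zero (n := n) (by lia)
    rw [relHAux_succ m hlt, relHAux_succ n hlt]
    refine Finset.sum_congr rfl fun C hC ↦ ?_
    obtain ⟨hAC, hCB⟩ := Finset.mem_Ico.mp hC
    have hrank := rank_strictMono hCB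
    rw [ih hAC (by lia) (n := n) (by lia)]

lemma relH_eq_sum (hAB : A < B) : relH A.toSet B.toSet =
    ∑ C ∈ Finset.Ico A B, relG A.toSet C.toSet * (X - 1) ^ (B.rank - C.rank - 1) := by
  have hrank := rank_strictMono hAB
  obtain ⟨n, hn⟩ := Nat.exists_eq_add_one_of_ne_zero (n := B.rank) (by lia)
  rw [relH, toNat_pdim_toSet_add_one, hn, relHAux_succ n hAB]
  refine Finset.sum_congr rfl fun C hC ↦ ?_
  obtain ⟨hAC, hCB⟩ := Finset.mem_Ico.mp hC
  have hrank := rank_strictMono hCB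
  rw [relG, relH, toNat_pdim_toSet_add_one, relHAux_congr hAC le_rfl (n := n) (by lia), hn]

lemma X_sub_one_mul_relH (hAB : A < B) : (X - 1) * relH A.toSet B.toSet =
    ∑ C ∈ Finset.Ico A B, relG A.toSet C.toSet * (X - 1) ^ (B.rank - C.rank) := by
  rw [relH_eq_sum hAB, Finset.mul_sum]
  refine Finset.sum_congr rfl fun C hC ↦ ?_
  have hrank := rank_strictMono (Finset.mem_Ico.mp hC).2
  rw [mul_left_comm, mul_pow_sub_one (by lia)]

theorem isToricG_relG :
    IsToricG (rank (S := S)) fun A B : FaceLattice S ↦ relG A.toSet B.toSet where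
  self A := relG_self A.toSet
  coeff A B hAB j := by
    have hrank := rank_strictMono hAB
    have hdegree : j ≤ (pdim B.toSet - pdim A.toSet - 1).toNat / 2 ↔
        2 * j < B.rank - A.rank := by
      rw [pdim_toSet, pdim_toSet]
      lia
    rw [relG, coeff_truncG, X_sub_one_mul_relH hAB]
    exact if_congr hdegree rfl rfl

end FaceLattice

end FaceLattice

end Stenson

/-- Stenson's identity (odd-dimensional case of Kalai's identity): for a
polytope of odd dimension `d = 2k+1`,
`(k+2)·g_k(P) = ∑_{i=0}^{k} (i+1) ∑_{dim F = 2i} g_i(F)·g_{k-i}(P/F)`. -/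
theorem stenson_identity {V : Type*} [AddCommGroup V] [Module ℝ V]
    (P : Set V) (hP : IsPolytope P) (k : ℕ) (hdim : pdim P = (2 * k + 1 : ℤ)) :
    ((k : ℚ) + 2) * (toricG P).coeff k =
      ∑ i ∈ Finset.range (k + 1), ((i : ℚ) + 1) *
        ∑ᶠ F ∈ {F : Set V | IsFace P F ∧ pdim F = (2 * i : ℤ)},
          (toricG F).coeff i * (relG F P).coeff (k - i) := by
  obtain ⟨S, rfl⟩ := hP
  have hrank : (⊤ : Stenson.FaceLattice S).rank = (⊥ : Stenson.FaceLattice S).rank + 2 * k + 2 := by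
    have := hdim.symm.trans (Stenson.FaceLattice.pdim_toSet (⊤ : Stenson.FaceLattice S))
    rw [Stenson.FaceLattice.rank_bot]
    lia
  have hidentity := Stenson.FaceLattice.isToricG_relG.stenson
    Stenson.FaceLattice.isEulerianRank_rank bot_le hrank
  rw [Stenson.FaceLattice.rank_bot, Stenson.FaceLattice.toSet_bot, Finset.Icc_bot_top] at hidentity
  refine hidentity.trans (Finset.sum_congr rfl fun i _ ↦ congrArg (((i : ℚ) + 1) * ·) ?_)
  have hsum := Stenson.FaceLattice.finsum_mem_isFace_pdim_eq S (2 * i) fun F ↦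
    (toricG F).coeff i * (relG F (convexHull ℝ S)).coeff (k - i)
  rw [zero_add]
  exact_mod_cast hsum.symm
end

section
/- (Stanley; toric Dehn–Sommerville relations) For every polytope P of dimension d and every integer k with 0 ≤ k ≤ d, one has h_k(P) = h_{d−k}(P). -/
open Classical Polynomial

/-!
The face lattice of a polytope is that of the cone over it. The faces of a polyhedral cone lying
above a proper face `E` are in dimension-preserving bijection with the nonempty cells cut out by
the hyperplanes active on `E`; the sum of `(-1) ^ dim` over these cells is the compactly supported
Euler characteristic of a proper closed cone with interior points, which is zero because cutting
along the hyperplanes one at a time is additive. Hence every nontrivial interval of the face lattice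
contains as many faces of even as of odd rank.

Write `p ↦ pʳᵉᵛ` for the reversal of a polynomial in the degree given by the rank `ρ`. By induction
on `b`, the toric polynomials of such a lattice satisfy
`(g b)ʳᵉᵛ = ∑ a ≤ b, g a * (X - 1) ^ (ρ b - ρ a)`. Indeed `(X - 1) * h b` is the part of this sum
over `a < b`; reversing it, expanding with the inductive hypothesis and exchanging summations, the
balance of signs in the intervals `[e, b]` shows that it is antisymmetric, so that `h b` is
symmetric. The identity at `b` then follows because `g b` is the lower half of `(1 - X) * h b`.
-/

section Arrangement

variable {W : Type*} [AddCommGroup W] [Module ℝ W]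

lemma exists_pos_add_smul {N : Finset (Module.Dual ℝ W)} {x : W} (hx : ∀ f ∈ N, 0 < f x) (y : W) :
    ∃ ε : ℝ, 0 < ε ∧ ∀ f ∈ N, 0 < f (x + ε • y) := by
  have hcont (f : Module.Dual ℝ W) : Continuous fun ε : ℝ => f (x + ε • y) := by
    simp only [map_add, map_smul, smul_eq_mul]
    fun_prop
  have hnear : ∀ᶠ ε in nhdsWithin (0 : ℝ) (Set.Ioi 0), ∀ f ∈ N, 0 < f (x + ε • y) := by
    rw [Filter.eventually_all_finset]
    intro f hf
    refine (((hcont f).tendsto 0).mono_left nhdsWithin_le_nhds).eventually_const_lt ?_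
    simpa using hx f hf
  exact (eventually_mem_nhdsWithin.and hnear).exists

lemma finrank_inf_ker_add_one {K : Submodule ℝ W} [FiniteDimensional ℝ K] {f : Module.Dual ℝ W}
    {y : W} (hy : y ∈ K) (hfy : f y ≠ 0) :
    Module.finrank ℝ ↥(K ⊓ LinearMap.ker f) + 1 = Module.finrank ℝ K := by
  have hne : f.domRestrict K ≠ 0 := fun h => hfy (LinearMap.congr_fun h ⟨y, hy⟩)
  rw [← Module.Dual.finrank_ker_add_one_of_ne_zero hne, LinearMap.ker_domRestrict,
    ← Submodule.map_comap_subtype, (Submodule.equivSubtypeMap K _).finrank_eq]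

/-- The compactly supported Euler characteristic of the relatively open polyhedral cone cut out of
the subspace `K` by the strict inequalities `0 < f x`, `f ∈ N`: it is `(-1) ^ dim K` unless the
cone is empty, in which case it is `0`. -/
noncomputable def cellEuler (K : Submodule ℝ W) (N : Finset (Module.Dual ℝ W)) : ℤ :=
  if ∃ x ∈ K, ∀ f ∈ N, 0 < f x then (-1) ^ Module.finrank ℝ K else 0

lemma exists_mem_forall_insert_pos {K : Submodule ℝ W} {N : Finset (Module.Dual ℝ W)}
    {f : Module.Dual ℝ W} {x y : W} (hx : x ∈ K) (hfx : f x = 0) (hN : ∀ g ∈ N, 0 < g x)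
    (hy : y ∈ K) (hfy : 0 < f y) :
    ∃ z ∈ K, ∀ g ∈ insert f N, 0 < g z := by
  obtain ⟨ε, hε, hpos⟩ := exists_pos_add_smul hN y
  refine ⟨x + ε • y, K.add_mem hx (K.smul_mem ε hy), ?_⟩
  rw [Finset.forall_mem_insert]
  refine ⟨?_, hpos⟩
  rw [map_add, map_smul, hfx, zero_add]
  exact mul_pos hε hfy

lemma exists_mem_ker_forall_pos_iff {K : Submodule ℝ W} {N : Finset (Module.Dual ℝ W)}
    {f : Module.Dual ℝ W} {y : W} (hy : y ∈ K) (hfy : 0 < f y) :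
    (∃ x ∈ K ⊓ LinearMap.ker f, ∀ g ∈ N, 0 < g x) ↔
      (∃ x ∈ K, ∀ g ∈ insert f N, 0 < g x) ∧ ∃ x ∈ K, ∀ g ∈ insert (-f) N, 0 < g x := by
  constructor
  · rintro ⟨x, ⟨hx, hfx⟩, hN⟩
    have hfx : f x = 0 := hfx
    exact ⟨exists_mem_forall_insert_pos hx hfx hN hy hfy,
      exists_mem_forall_insert_pos hx (by simp [hfx]) hN (K.neg_mem hy) (by simpa)⟩
  · simp only [Finset.forall_mem_insert, LinearMap.neg_apply, Left.neg_pos_iff]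
    rintro ⟨⟨p, hp, hfp, hNp⟩, q, hq, hfq, hNq⟩
    refine ⟨(-f q) • p + f p • q, ⟨K.add_mem (K.smul_mem _ hp) (K.smul_mem _ hq), ?_⟩, ?_⟩
    · simp only [SetLike.mem_coe, LinearMap.mem_ker, map_add, map_smul, smul_eq_mul]
      ring
    · intro g hg
      simp only [map_add, map_smul, smul_eq_mul]
      exact add_pos (mul_pos (neg_pos.2 hfq) (hNp g hg)) (mul_pos hfp (hNq g hg))

lemma cellEuler_eq_add_add_of_pos {K : Submodule ℝ W} [FiniteDimensional ℝ K]
    (N : Finset (Module.Dual ℝ W)) {f : Module.Dual ℝ W} {y : W} (hy : y ∈ K) (hfy : 0 < f y) :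
    cellEuler K N = cellEuler K (insert f N) + cellEuler (K ⊓ LinearMap.ker f) N +
      cellEuler K (insert (-f) N) := by
  have hsplit : (∃ x ∈ K, ∀ g ∈ N, 0 < g x) ↔ (∃ x ∈ K, ∀ g ∈ insert f N, 0 < g x) ∨
      (∃ x ∈ K ⊓ LinearMap.ker f, ∀ g ∈ N, 0 < g x) ∨ ∃ x ∈ K, ∀ g ∈ insert (-f) N, 0 < g x := by
    simp only [Finset.forall_mem_insert, LinearMap.neg_apply, Left.neg_pos_iff, Submodule.mem_inf,
      LinearMap.mem_ker]
    constructor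
    · rintro ⟨x, hx, hN⟩
      rcases lt_trichotomy (f x) 0 with h | h | h
      · exact .inr (.inr ⟨x, hx, h, hN⟩)
      · exact .inr (.inl ⟨x, ⟨hx, h⟩, hN⟩)
      · exact .inl ⟨x, hx, h, hN⟩
    · rintro (⟨x, hx, -, hN⟩ | ⟨x, ⟨hx, -⟩, hN⟩ | ⟨x, hx, -, hN⟩) <;> exact ⟨x, hx, hN⟩
  simp only [cellEuler, hsplit, exists_mem_ker_forall_pos_iff hy hfy,
    ← finrank_inf_ker_add_one hy hfy.ne', pow_succ]
  by_cases hpos : ∃ x ∈ K, ∀ g ∈ insert f N, 0 < g x <;>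
    by_cases hneg : ∃ x ∈ K, ∀ g ∈ insert (-f) N, 0 < g x <;>
    simp only [hpos, hneg, and_true, and_false, or_true, or_false, if_true, if_false] <;> ring

lemma cellEuler_eq_add_add (K : Submodule ℝ W) [FiniteDimensional ℝ K]
    (N : Finset (Module.Dual ℝ W)) (f : Module.Dual ℝ W) :
    cellEuler K N = cellEuler K (insert f N) + cellEuler (K ⊓ LinearMap.ker f) N +
      cellEuler K (insert (-f) N) := by
  by_cases hf : ∃ y ∈ K, 0 < f y
  · obtain ⟨y, hy, hfy⟩ := hf
    exact cellEuler_eq_add_add_of_pos N hy hfy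
  · have hzero : ∀ y ∈ K, f y = 0 := fun y hy => by
      push Not at hf
      exact le_antisymm (hf y hy) (by simpa using hf (-y) (K.neg_mem hy))
    have hker : K ⊓ LinearMap.ker f = K := inf_eq_left.2 hzero
    have hpos : cellEuler K (insert f N) = 0 :=
      if_neg fun ⟨x, hx, h⟩ => (h f (N.mem_insert_self f)).ne' (hzero x hx)
    have hneg : cellEuler K (insert (-f) N) = 0 :=
      if_neg fun ⟨x, hx, h⟩ => (h (-f) (N.mem_insert_self _)).ne' (by simp [hzero x hx])
    rw [hker, hpos, hneg, zero_add, add_zero]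

lemma sum_powerset_insert_cellEuler (K : Submodule ℝ W) [FiniteDimensional ℝ K]
    (N : Finset (Module.Dual ℝ W)) {L : Finset (Module.Dual ℝ W)} {f : Module.Dual ℝ W}
    (hf : f ∉ L) :
    ∑ A ∈ (insert f L).powerset, cellEuler (K ⊓ A.inf LinearMap.ker) (N ∪ (insert f L \ A)) =
      ∑ A ∈ L.powerset, cellEuler (K ⊓ A.inf LinearMap.ker) (N ∪ (L \ A)) -
        ∑ A ∈ L.powerset, cellEuler (K ⊓ A.inf LinearMap.ker) (insert (-f) N ∪ (L \ A)) := by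
  rw [Finset.sum_powerset_insert hf, ← Finset.sum_add_distrib, ← Finset.sum_sub_distrib]
  refine Finset.sum_congr rfl fun A hA => ?_
  have hfA : f ∉ A := fun h => hf (Finset.mem_powerset.1 hA h)
  rw [Finset.insert_sdiff_of_notMem _ hfA, Finset.insert_sdiff_insert,
    Finset.sdiff_insert_of_notMem hf, Finset.union_insert, Finset.insert_union, Finset.inf_insert,
    inf_left_comm, inf_comm (LinearMap.ker f),
    cellEuler_eq_add_add (K ⊓ A.inf LinearMap.ker) (N ∪ (L \ A)) f]
  ring

/-- The sum is the compactly supported Euler characteristic of `{x ∈ K | 0 < N, 0 ≤ L}`. -/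
lemma sum_powerset_cellEuler_of_neg (K : Submodule ℝ W) [FiniteDimensional ℝ K]
    (N L : Finset (Module.Dual ℝ W)) {w : W} (hw : w ∈ K) (hN : ∀ f ∈ N, 0 < f w)
    (hL : ∀ f ∈ L, f w < 0) :
    ∑ A ∈ L.powerset, cellEuler (K ⊓ A.inf LinearMap.ker) (N ∪ (L \ A)) =
      if L = ∅ then (-1) ^ Module.finrank ℝ K else 0 := by
  induction L using Finset.induction_on generalizing N with
  | empty =>
    have hcell : ∃ x ∈ K, ∀ f ∈ N, 0 < f x := ⟨w, hw, hN⟩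
    rw [Finset.powerset_empty, Finset.sum_singleton, Finset.inf_empty, inf_top_eq,
      Finset.sdiff_self, Finset.union_empty, if_pos rfl, cellEuler, if_pos hcell]
  | insert f L hf ih =>
    rw [Finset.forall_mem_insert] at hL
    have hN' : ∀ g ∈ insert (-f) N, 0 < g w :=
      (Finset.forall_mem_insert ..).2 ⟨by simpa using hL.1, hN⟩
    rw [sum_powerset_insert_cellEuler K N hf, ih N hN hL.2, ih (insert (-f) N) hN' hL.2, sub_self,
      if_neg (Finset.insert_ne_empty f L)]

theorem sum_powerset_cellEuler_eq_zero (K : Submodule ℝ W) [FiniteDimensional ℝ K]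
    {L : Finset (Module.Dual ℝ W)} (hL : L.Nonempty) {v : W} (hv : v ∈ K)
    (hpos : ∀ f ∈ L, 0 < f v) :
    ∑ A ∈ L.powerset, cellEuler (K ⊓ A.inf LinearMap.ker) (L \ A) = 0 := by
  simpa [hL.ne_empty] using sum_powerset_cellEuler_of_neg K ∅ L (K.neg_mem hv) (by simp)
    (by simpa using hpos)

end Arrangement

section HRep

variable {W : Type*} [AddCommGroup W] [Module ℝ W]

/-- A polyhedral description of the cone `C` inside a finite-dimensional subspace `U` by the
inequalities `0 ≤ f x`, `f ∈ L`. All of them are strict at some point of `U`, so `U` is the linear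
span of `C`. -/
structure IsHRep (C : PointedCone ℝ W) (U : Submodule ℝ W) (L : Finset (Module.Dual ℝ W)) :
    Prop where
  finiteDimensional : FiniteDimensional ℝ U
  mem_iff {x : W} : x ∈ C ↔ x ∈ U ∧ ∀ f ∈ L, 0 ≤ f x
  exists_pos : ∃ v ∈ U, ∀ f ∈ L, 0 < f v

lemma exists_nonneg_forall_mul_le {ι : Type*} {s : Finset ι} {a b : ι → ℝ}
    (hnonneg : ∀ i ∈ s, 0 ≤ a i → 0 ≤ b i)
    (hcross : ∀ i ∈ s, ∀ j ∈ s, 0 < a i → a j < 0 → 0 ≤ a i * b j - a j * b i) :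
    ∃ t : ℝ, 0 ≤ t ∧ ∀ i ∈ s, t * a i ≤ b i := by
  set lower : Finset ℝ := insert 0 ((s.filter (a · < 0)).image fun j => b j / a j)
  have hlower : lower.Nonempty := Finset.insert_nonempty ..
  have hmem : lower.max' hlower ∈ lower := lower.max'_mem hlower
  refine ⟨lower.max' hlower, lower.le_max' 0 (Finset.mem_insert_self ..), fun i hi => ?_⟩
  rcases lt_trichotomy (a i) 0 with hneg | hzero | hpos
  · have hle : b i / a i ≤ lower.max' hlower := lower.le_max' _ <|
      Finset.mem_insert_of_mem <| Finset.mem_image_of_mem _ <| Finset.mem_filter.2 ⟨hi, hneg⟩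
    exact (div_le_iff_of_neg hneg).1 hle
  · simpa [hzero] using hnonneg i hi hzero.ge
  · rw [← le_div_iff₀ hpos]
    rcases Finset.mem_insert.1 hmem with hmax | hmax
    · rw [hmax]
      exact div_nonneg (hnonneg i hi hpos.le) hpos.le
    · obtain ⟨j, hj, hmax⟩ := Finset.mem_image.1 hmax
      obtain ⟨hj, hneg⟩ := Finset.mem_filter.1 hj
      rw [← hmax, le_div_iff₀ hpos, div_mul_eq_mul_div, div_le_iff_of_neg hneg]
      linarith [hcross i hi j hj hpos hneg]

lemma mem_hull_insert_iff {S : Set W} {u x : W} :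
    x ∈ PointedCone.hull ℝ (insert u S) ↔ ∃ t : ℝ, 0 ≤ t ∧ x - t • u ∈ PointedCone.hull ℝ S := by
  rw [PointedCone.hull, Submodule.mem_span_insert]
  constructor
  · rintro ⟨t, z, hz, rfl⟩
    exact ⟨t, t.2, by rwa [Nonneg.coe_smul, add_sub_cancel_left]⟩
  · rintro ⟨t, ht, hx⟩
    exact ⟨⟨t, ht⟩, _, hx, by rw [Nonneg.mk_smul, add_sub_cancel]⟩

namespace IsHRep

variable {C D : PointedCone ℝ W} {U : Submodule ℝ W} {L : Finset (Module.Dual ℝ W)} {u : W}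

/-- Fourier–Motzkin elimination of `t` from the system `0 ≤ t`, `0 ≤ f (x - t • u)`. -/
lemma add_ray_of_mem (h : IsHRep C U L) (hu : u ∈ U)
    (hD : ∀ x, x ∈ D ↔ ∃ t : ℝ, 0 ≤ t ∧ x - t • u ∈ C) :
    IsHRep D U (L.filter (0 ≤ · u) ∪
      Finset.image₂ (fun f g => f u • g - g u • f) (L.filter (0 < · u)) (L.filter (· u < 0))) where
  finiteDimensional := h.finiteDimensional
  mem_iff {x} := by
    simp only [hD, h.mem_iff, map_sub, map_smul, smul_eq_mul, sub_nonneg, Finset.forall_mem_union,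
      Finset.forall_mem_image₂, Finset.mem_filter, LinearMap.sub_apply, LinearMap.smul_apply]
    constructor
    · rintro ⟨t, ht, hxU, hx⟩
      refine ⟨by simpa using U.add_mem hxU (U.smul_mem t hu), ?_, ?_⟩
      · rintro f ⟨hf, hfu⟩
        exact (mul_nonneg ht hfu).trans (hx f hf)
      · rintro f ⟨hf, hfu⟩ g ⟨hg, hgu⟩
        nlinarith [hx f hf, hx g hg]
    · rintro ⟨hxU, hnonneg, hcross⟩
      obtain ⟨t, ht, hle⟩ := exists_nonneg_forall_mul_le (s := L) (a := (· u)) (b := (· x))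
        (fun f hf hfu => hnonneg f ⟨hf, hfu⟩)
        (fun f hf g hg hfu hgu => sub_nonneg.2 (hcross f ⟨hf, hfu⟩ g ⟨hg, hgu⟩))
      exact ⟨t, ht, U.sub_mem hxU (U.smul_mem t hu), hle⟩
  exists_pos := by
    obtain ⟨v, hv, hpos⟩ := h.exists_pos
    refine ⟨v, hv, ?_⟩
    simp only [Finset.forall_mem_union, Finset.forall_mem_image₂, Finset.mem_filter,
      LinearMap.sub_apply, LinearMap.smul_apply, smul_eq_mul]
    refine ⟨fun f hf => hpos f hf.1, ?_⟩
    rintro f ⟨hf, hfu⟩ g ⟨hg, hgu⟩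
    nlinarith [hpos f hf, hpos g hg]

lemma exists_add_ray_of_notMem (h : IsHRep C U L) (hu : u ∉ U)
    (hD : ∀ x, x ∈ D ↔ ∃ t : ℝ, 0 ≤ t ∧ x - t • u ∈ C) :
    ∃ L' : Finset (Module.Dual ℝ W), IsHRep D (U ⊔ Submodule.span ℝ {u}) L' := by
  obtain ⟨φ, hφ, hφu⟩ := LinearMap.exists_extend_of_notMem (0 : U →ₗ[ℝ] ℝ) hu 1
  have hφU : ∀ x ∈ U, φ x = 0 := fun x hx => LinearMap.congr_fun hφ ⟨x, hx⟩
  refine ⟨insert φ (L.image fun f => f - f u • φ), ?_, fun {x} => ?_, ?_⟩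
  · have := h.finiteDimensional
    infer_instance
  · simp only [hD, h.mem_iff, map_sub, map_smul, smul_eq_mul, sub_nonneg, Finset.forall_mem_insert,
      Finset.forall_mem_image, LinearMap.sub_apply, LinearMap.smul_apply,
      Submodule.mem_sup, Submodule.mem_span_singleton]
    constructor
    · rintro ⟨t, ht, hxU, hx⟩
      have hφx : φ x = t := by simpa [hφu, sub_eq_zero] using hφU _ hxU
      refine ⟨⟨_, hxU, _, ⟨t, rfl⟩, by simp⟩, hφx ▸ ht, fun f hf => ?_⟩
      rw [hφx, mul_comm]
      exact hx f hf
    · rintro ⟨⟨y, hy, _, ⟨t, rfl⟩, rfl⟩, hφx, hx⟩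
      have hφx' : φ (y + t • u) = t := by simp [hφU y hy, hφu]
      rw [hφx'] at hφx hx
      exact ⟨t, hφx, by simpa using hy, fun f hf => by linarith [hx hf, mul_comm t (f u)]⟩
  · obtain ⟨v, hv, hpos⟩ := h.exists_pos
    refine ⟨v + u, Submodule.add_mem_sup hv (Submodule.mem_span_singleton_self u), ?_⟩
    simpa [hφU v hv, hφu] using hpos

end IsHRep

theorem exists_isHRep_hull {S : Set W} (hS : S.Finite) :
    ∃ (U : Submodule ℝ W) (L : Finset (Module.Dual ℝ W)), IsHRep (PointedCone.hull ℝ S) U L := by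
  induction S, hS using Set.Finite.induction_on with
  | empty =>
    refine ⟨⊥, ∅, inferInstance, ?_, 0, zero_mem _, by simp⟩
    simp
  | @insert u S _ _ ih =>
    obtain ⟨U, L, h⟩ := ih
    by_cases hu : u ∈ U
    · exact ⟨U, _, h.add_ray_of_mem hu fun x => mem_hull_insert_iff⟩
    · exact ⟨_, h.exists_add_ray_of_notMem hu fun x => mem_hull_insert_iff⟩

end HRep

section ConeFaces

variable {W : Type*} [AddCommGroup W] [Module ℝ W]

lemma isFaceOf_of_mem_iff_eq_zero {C F : PointedCone ℝ W} {f : Module.Dual ℝ W}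
    (hf : ∀ x ∈ C, 0 ≤ f x) (hF : ∀ x, x ∈ F ↔ x ∈ C ∧ f x = 0) : F.IsFaceOf C where
  le x hx := ((hF x).1 hx).1
  mem_of_smul_add_mem {x y a} hx hy ha h := by
    have hzero : a * f x + f y = 0 := by simpa using ((hF _).1 h).2
    refine (hF x).2 ⟨hx, ?_⟩
    nlinarith [hf x hx, hf y hy, mul_nonneg ha.le (hf x hx)]

/-- The functionals of `L` that vanish identically on `F`. -/
noncomputable def activeSet (L : Finset (Module.Dual ℝ W)) (F : PointedCone ℝ W) :
    Finset (Module.Dual ℝ W) :=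
  L.filter fun f => ∀ x ∈ F, f x = 0

lemma mem_activeSet {L : Finset (Module.Dual ℝ W)} {F : PointedCone ℝ W} {f : Module.Dual ℝ W} :
    f ∈ activeSet L F ↔ f ∈ L ∧ ∀ x ∈ F, f x = 0 :=
  Finset.mem_filter

lemma activeSet_anti (L : Finset (Module.Dual ℝ W)) {E F : PointedCone ℝ W} (h : E ≤ F) :
    activeSet L F ⊆ activeSet L E := fun _ hf =>
  mem_activeSet.2 ⟨(mem_activeSet.1 hf).1, fun x hx => (mem_activeSet.1 hf).2 x (h hx)⟩

namespace IsHRep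

variable {C E F : PointedCone ℝ W} {U : Submodule ℝ W} {L : Finset (Module.Dual ℝ W)}

lemma span_eq (h : IsHRep C U L) : Submodule.span ℝ (C : Set W) = U := by
  refine le_antisymm (Submodule.span_le.2 fun x hx => (h.mem_iff.1 hx).1) fun x hx => ?_
  obtain ⟨v, hv, hpos⟩ := h.exists_pos
  obtain ⟨ε, hε, hεpos⟩ := exists_pos_add_smul hpos x
  have hvC : v ∈ C := h.mem_iff.2 ⟨hv, fun f hf => (hpos f hf).le⟩
  have hvxC : v + ε • x ∈ C :=
    h.mem_iff.2 ⟨U.add_mem hv (U.smul_mem ε hx), fun f hf => (hεpos f hf).le⟩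
  rw [← Submodule.smul_mem_iff _ hε.ne']
  simpa using Submodule.sub_mem _ (Submodule.subset_span hvxC) (Submodule.subset_span hvC)

lemma exists_mem_forall_pos (h : IsHRep C U L) (hF : F ≤ C) :
    ∃ p ∈ F, ∀ f ∈ L \ activeSet L F, 0 < f p := by
  have hnonneg : ∀ f ∈ L, ∀ x ∈ F, 0 ≤ f x := fun f hf x hx => (h.mem_iff.1 (hF hx)).2 f hf
  have hpos : ∀ f ∈ L \ activeSet L F, ∃ x ∈ F, 0 < f x := fun f hf => by
    obtain ⟨hfL, hfF⟩ := Finset.mem_sdiff.1 hf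
    simp only [mem_activeSet, hfL, true_and, not_forall] at hfF
    obtain ⟨x, hx, hne⟩ := hfF
    exact ⟨x, hx, (hnonneg f hfL x hx).lt_of_ne' hne⟩
  choose! x hx hfx using hpos
  refine ⟨∑ f ∈ L \ activeSet L F, x f, F.sum_mem hx, fun f hf => ?_⟩
  rw [map_sum]
  exact Finset.sum_pos' (fun g hg => hnonneg f (Finset.mem_sdiff.1 hf).1 _ (hx g hg))
    ⟨f, hf, hfx f hf⟩

lemma mem_face_iff (h : IsHRep C U L) (hF : F.IsFaceOf C) {x : W} :
    x ∈ F ↔ x ∈ C ∧ ∀ f ∈ activeSet L F, f x = 0 := by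
  refine ⟨fun hx => ⟨hF.le hx, fun f hf => (mem_activeSet.1 hf).2 x hx⟩, ?_⟩
  rintro ⟨hx, hzero⟩
  obtain ⟨p, hp, hpos⟩ := h.exists_mem_forall_pos hF.le
  obtain ⟨ε, hε, hεpos⟩ := exists_pos_add_smul hpos (-x)
  have hrest : p + ε • -x ∈ C := by
    refine h.mem_iff.2 ⟨U.add_mem (h.mem_iff.1 (hF.le hp)).1
      (U.smul_mem ε (U.neg_mem (h.mem_iff.1 hx).1)), fun f hf => ?_⟩
    by_cases hfF : f ∈ activeSet L F
    · simp [hzero f hfF, (mem_activeSet.1 hfF).2 p hp]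
    · exact (hεpos f (Finset.mem_sdiff.2 ⟨hf, hfF⟩)).le
  exact hF.mem_of_smul_add_mem hx hrest hε (by simpa using hp)

lemma activeSet_injOn (h : IsHRep C U L) : Set.InjOn (activeSet L) {F | F.IsFaceOf C} :=
  fun F hF G hG hFG => by
    ext x
    rw [h.mem_face_iff hF, h.mem_face_iff hG, hFG]

lemma finite_faces (h : IsHRep C U L) : {F : PointedCone ℝ W | F.IsFaceOf C}.Finite :=
  Set.Finite.of_injOn (t := L.powerset)
    (fun _ _ => Finset.mem_coe.2 (Finset.mem_powerset.2 (Finset.filter_subset ..)))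
    h.activeSet_injOn (Finset.finite_toSet _)

lemma face (h : IsHRep C U L) (hF : F.IsFaceOf C) :
    IsHRep F (U ⊓ (activeSet L F).inf LinearMap.ker) (L \ activeSet L F) where
  finiteDimensional :=
    have := h.finiteDimensional
    inferInstance
  mem_iff {x} := by
    simp only [h.mem_face_iff hF, h.mem_iff, Submodule.mem_inf, Submodule.mem_finsetInf,
      LinearMap.mem_ker, Finset.mem_sdiff]
    refine ⟨fun ⟨⟨hU, hL⟩, hzero⟩ => ⟨⟨hU, hzero⟩, fun f hf => hL f hf.1⟩, ?_⟩
    rintro ⟨⟨hU, hzero⟩, hL⟩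
    refine ⟨⟨hU, fun f hf => ?_⟩, hzero⟩
    by_cases hfF : f ∈ activeSet L F
    · exact (hzero f hfF).ge
    · exact hL f ⟨hf, hfF⟩
  exists_pos := by
    obtain ⟨p, hp, hpos⟩ := h.exists_mem_forall_pos hF.le
    obtain ⟨hpC, hzero⟩ := (h.mem_face_iff hF).1 hp
    exact ⟨p, ⟨(h.mem_iff.1 hpC).1, by simpa [Submodule.mem_finsetInf] using hzero⟩, hpos⟩

lemma activeSet_nonempty (h : IsHRep C U L) (hF : F.IsFaceOf C) (hne : F ≠ C) :
    (activeSet L F).Nonempty := by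
  rw [Finset.nonempty_iff_ne_empty]
  intro hempty
  refine hne (PointedCone.ext fun x => ?_)
  simp [h.mem_face_iff hF, hempty]

lemma finrank_span_lt (h : IsHRep C U L) (hF : F.IsFaceOf C) (hne : F ≠ C) :
    Module.finrank ℝ (Submodule.span ℝ (F : Set W)) <
      Module.finrank ℝ (Submodule.span ℝ (C : Set W)) := by
  rw [(h.face hF).span_eq, h.span_eq]
  have := h.finiteDimensional
  refine Submodule.finrank_lt_finrank_of_lt (inf_lt_left.2 fun hle => ?_)
  obtain ⟨v, hv, hpos⟩ := h.exists_pos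
  obtain ⟨f, hf⟩ := h.activeSet_nonempty hF hne
  have hfv : f v = 0 := (Submodule.mem_finsetInf.1 (hle hv)) f hf
  exact (hpos f (mem_activeSet.1 hf).1).ne' hfv

lemma sum_apply_eq_zero_iff (h : IsHRep C U L) {A : Finset (Module.Dual ℝ W)} (hA : A ⊆ L) {x : W}
    (hx : x ∈ C) : (∑ f ∈ A, f) x = 0 ↔ ∀ f ∈ A, f x = 0 := by
  rw [LinearMap.sum_apply]
  exact Finset.sum_eq_zero_iff_of_nonneg fun f hf => (h.mem_iff.1 hx).2 f (hA hf)

lemma sum_apply_nonneg (h : IsHRep C U L) {A : Finset (Module.Dual ℝ W)} (hA : A ⊆ L) (x : W)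
    (hx : x ∈ C) : 0 ≤ (∑ f ∈ A, f) x := by
  rw [LinearMap.sum_apply]
  exact Finset.sum_nonneg fun f hf => (h.mem_iff.1 hx).2 f (hA hf)

lemma exists_mem_face_iff_eq_zero (h : IsHRep C U L) (hF : F.IsFaceOf C) :
    ∃ f : Module.Dual ℝ W, (∀ x ∈ C, 0 ≤ f x) ∧ ∀ x, x ∈ F ↔ x ∈ C ∧ f x = 0 := by
  have hsub : activeSet L F ⊆ L := Finset.filter_subset ..
  refine ⟨∑ f ∈ activeSet L F, f, h.sum_apply_nonneg hsub, fun x => ?_⟩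
  rw [h.mem_face_iff hF]
  exact and_congr_right fun hx => (h.sum_apply_eq_zero_iff hsub hx).symm

lemma exists_mem_forall_eq_zero_forall_pos (h : IsHRep C U L) (hE : E ≤ C)
    {A : Finset (Module.Dual ℝ W)} (hA : A ⊆ activeSet L E) {x : W}
    (hx : x ∈ U ⊓ A.inf LinearMap.ker) (hpos : ∀ f ∈ activeSet L E \ A, 0 < f x) :
    ∃ q ∈ C, (∀ f ∈ A, f q = 0) ∧ ∀ f ∈ L, f ∉ A → 0 < f q := by
  have hAx : ∀ f ∈ A, f x = 0 := Submodule.mem_finsetInf.1 hx.2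
  have hAE : ∀ f ∈ activeSet L E, ∀ y ∈ E, f y = 0 := fun f hf => (mem_activeSet.1 hf).2
  obtain ⟨p, hp, hppos⟩ := h.exists_mem_forall_pos hE
  obtain ⟨ε, hε, hεpos⟩ := exists_pos_add_smul hppos x
  have hqpos : ∀ f ∈ L, f ∉ A → 0 < f (p + ε • x) := fun f hf hfA => by
    by_cases hfE : f ∈ activeSet L E
    · simpa [hAE f hfE p hp] using mul_pos hε (hpos f (Finset.mem_sdiff.2 ⟨hfE, hfA⟩))
    · exact hεpos f (Finset.mem_sdiff.2 ⟨hf, hfE⟩)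
  have hqzero : ∀ f ∈ A, f (p + ε • x) = 0 := fun f hf => by
    simp [hAE f (hA hf) p hp, hAx f hf]
  refine ⟨p + ε • x, h.mem_iff.2 ⟨?_, fun f hf => ?_⟩, hqzero, hqpos⟩
  · exact U.add_mem (h.mem_iff.1 (hE hp)).1 (U.smul_mem ε hx.1)
  · by_cases hfA : f ∈ A
    · exact (hqzero f hfA).ge
    · exact (hqpos f hf hfA).le

lemma exists_face_activeSet_eq (h : IsHRep C U L) (hE : E.IsFaceOf C)
    {A : Finset (Module.Dual ℝ W)} (hA : A ⊆ activeSet L E) {x : W}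
    (hx : x ∈ U ⊓ A.inf LinearMap.ker) (hpos : ∀ f ∈ activeSet L E \ A, 0 < f x) :
    ∃ F : PointedCone ℝ W, F.IsFaceOf C ∧ E ≤ F ∧ activeSet L F = A := by
  have hAL : A ⊆ L := hA.trans (Finset.filter_subset ..)
  obtain ⟨F, hF⟩ : ∃ F : PointedCone ℝ W, ∀ y, y ∈ F ↔ y ∈ C ∧ (∑ f ∈ A, f) y = 0 :=
    ⟨C ⊓ PointedCone.ofSubmodule (LinearMap.ker (∑ f ∈ A, f)), fun y => by simp⟩
  have hmemF (y : W) : y ∈ F ↔ y ∈ C ∧ ∀ f ∈ A, f y = 0 := by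
    rw [hF]
    exact and_congr_right (h.sum_apply_eq_zero_iff hAL)
  refine ⟨F, isFaceOf_of_mem_iff_eq_zero (h.sum_apply_nonneg hAL) hF, fun y hy =>
    (hmemF y).2 ⟨hE.le hy, fun f hf => (mem_activeSet.1 (hA hf)).2 y hy⟩, ?_⟩
  obtain ⟨q, hqC, hqzero, hqpos⟩ := h.exists_mem_forall_eq_zero_forall_pos hE.le hA hx hpos
  have hqF : q ∈ F := (hmemF q).2 ⟨hqC, hqzero⟩
  ext f
  rw [mem_activeSet]
  exact ⟨fun ⟨hf, hfF⟩ => by_contra fun hfA => (hqpos f hf hfA).ne' (hfF q hqF),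
    fun hf => ⟨hAL hf, fun y hy => ((hmemF y).1 hy).2 f hf⟩⟩

/-- **Euler's relation for cones.** The faces above `E` are the nonempty cells into which the
hyperplanes active on `E` divide the cone they cut out. -/
theorem finsum_faces_neg_one_pow_finrank_span (h : IsHRep C U L) (hE : E.IsFaceOf C)
    (hne : E ≠ C) :
    ∑ᶠ F ∈ {F : PointedCone ℝ W | F.IsFaceOf C ∧ E ≤ F},
      (-1 : ℤ) ^ Module.finrank ℝ (Submodule.span ℝ (F : Set W)) = 0 := by
  have := h.finiteDimensional
  obtain ⟨v, hv, hpos⟩ := h.exists_pos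
  rw [← sum_powerset_cellEuler_eq_zero U (h.activeSet_nonempty hE hne) hv
    fun f hf => hpos f (mem_activeSet.1 hf).1]
  simp only [cellEuler]
  rw [← Finset.sum_filter, ← finsum_mem_coe_finset]
  refine finsum_mem_eq_of_bijOn (activeSet L) ⟨fun F ⟨hF, hEF⟩ => ?_,
    h.activeSet_injOn.mono fun F hF => hF.1, fun A hA => ?_⟩
    fun F ⟨hF, _⟩ => by rw [(h.face hF).span_eq]
  · obtain ⟨p, hp, hp'⟩ := (h.face hF).exists_pos
    simp only [Finset.coe_filter, Finset.mem_powerset, Set.mem_ofPred_eq]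
    refine ⟨activeSet_anti L hEF, p, hp, fun f hf => hp' f ?_⟩
    exact Finset.sdiff_subset_sdiff (Finset.filter_subset ..) subset_rfl hf
  · simp only [Finset.coe_filter, Finset.mem_powerset, Set.mem_ofPred_eq] at hA
    obtain ⟨hA, x, hx, hxpos⟩ := hA
    obtain ⟨F, hF, hEF, rfl⟩ := h.exists_face_activeSet_eq hE hA hx hxpos
    exact ⟨F, ⟨hF, hEF⟩, rfl⟩

end IsHRep

end ConeFaces

section Homogenization

variable {V : Type*} [AddCommGroup V] [Module ℝ V] {P E F G : Set V}

/-- The cone over `F` placed at height one in `V × ℝ`. It is trivial for `F = ∅`, so that the empty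
face corresponds to the apex. -/
noncomputable def homogenization (F : Set V) : PointedCone ℝ (V × ℝ) :=
  PointedCone.hull ℝ (F ×ˢ {1})

lemma mk_one_mem_homogenization {x : V} (hx : x ∈ F) : (x, 1) ∈ homogenization F :=
  PointedCone.subset_hull ⟨hx, rfl⟩

lemma homogenization_le_iff_forall {C : PointedCone ℝ (V × ℝ)} :
    homogenization F ≤ C ↔ ∀ x ∈ F, (x, 1) ∈ C := by
  rw [homogenization, PointedCone.hull, Submodule.span_le]
  exact ⟨fun h x hx => h ⟨hx, rfl⟩, by rintro h ⟨x, _⟩ ⟨hx, rfl⟩; exact h x hx⟩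

lemma exists_smul_of_mem_homogenization (hF : Convex ℝ F) {w : V × ℝ} (hw : w ∈ homogenization F) :
    w = 0 ∨ ∃ r : ℝ, 0 < r ∧ ∃ x ∈ F, w = r • (x, 1) := by
  induction hw using Submodule.span_induction with
  | mem w hw =>
    obtain ⟨x, _⟩ := w
    obtain ⟨hx, rfl⟩ := hw
    exact .inr ⟨1, one_pos, x, hx, (one_smul ..).symm⟩
  | zero => exact .inl rfl
  | add w z _ _ ihw ihz =>
    rcases ihw with rfl | ⟨r, hr, x, hx, rfl⟩
    · rwa [zero_add]
    rcases ihz with rfl | ⟨s, hs, y, hy, rfl⟩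
    · exact .inr ⟨r, hr, x, hx, add_zero _⟩
    have hrs : r + s ≠ 0 := (add_pos hr hs).ne'
    refine .inr ⟨r + s, add_pos hr hs, (r / (r + s)) • x + (s / (r + s)) • y,
      hF hx hy (by positivity) (by positivity) (by field_simp), ?_⟩
    ext <;> simp [smul_smul, mul_div_cancel₀ _ hrs]
  | smul c w _ ih =>
    rcases ih with rfl | ⟨r, hr, x, hx, rfl⟩
    · exact .inl (smul_zero c)
    rcases c.2.eq_or_lt with hc | hc
    · rw [← Nonneg.coe_smul, ← hc, zero_smul]
      exact .inl rfl
    · exact .inr ⟨c * r, mul_pos hc hr, x, hx, by rw [← Nonneg.coe_smul, smul_smul]⟩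

lemma mk_one_mem_homogenization_iff (hF : Convex ℝ F) {x : V} :
    (x, 1) ∈ homogenization F ↔ x ∈ F := by
  refine ⟨fun h => ?_, mk_one_mem_homogenization⟩
  rcases exists_smul_of_mem_homogenization hF h with h | ⟨r, -, y, hy, h⟩
  · simp at h
  · obtain ⟨hxy, hr⟩ := Prod.ext_iff.1 h
    have hr : r = 1 := by simpa using hr.symm
    have hxy : x = y := by simpa [hr] using hxy
    exact hxy ▸ hy

lemma homogenization_le_iff (hF : Convex ℝ F) : homogenization E ≤ homogenization F ↔ E ⊆ F := by
  simp only [homogenization_le_iff_forall, mk_one_mem_homogenization_iff hF, Set.subset_def]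

lemma homogenization_injOn : Set.InjOn (homogenization (V := V)) {F | Convex ℝ F} :=
  fun _ hE _ hF h =>
    ((homogenization_le_iff hF).1 h.le).antisymm ((homogenization_le_iff hE).1 h.ge)

lemma mem_homogenization_iff_of_mem_iff (hP : Convex ℝ P) {f : Module.Dual ℝ (V × ℝ)}
    (hF : ∀ x, x ∈ F ↔ x ∈ P ∧ f (x, 1) = 0) (w : V × ℝ) :
    w ∈ homogenization F ↔ w ∈ homogenization P ∧ f w = 0 := by
  constructor
  · have hle : homogenization F ≤
        homogenization P ⊓ PointedCone.ofSubmodule (LinearMap.ker f) :=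
      homogenization_le_iff_forall.2 fun x hx =>
        ⟨mk_one_mem_homogenization ((hF x).1 hx).1, ((hF x).1 hx).2⟩
    exact fun hw => hle hw
  · rintro ⟨hw, hfw⟩
    rcases exists_smul_of_mem_homogenization hP hw with rfl | ⟨r, hr, x, hx, rfl⟩
    · exact zero_mem _
    · refine PointedCone.smul_mem _ hr.le (mk_one_mem_homogenization ((hF x).2 ⟨hx, ?_⟩))
      rw [map_smul] at hfw
      exact (smul_eq_zero.1 hfw).resolve_left hr.ne'

lemma forall_mem_homogenization_nonneg_iff {f : Module.Dual ℝ (V × ℝ)} :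
    (∀ w ∈ homogenization P, 0 ≤ f w) ↔ ∀ x ∈ P, 0 ≤ f (x, 1) := by
  have hle := homogenization_le_iff_forall (F := P) (C := (PointedCone.positive ℝ ℝ).comap f)
  simpa only [SetLike.le_def, PointedCone.mem_comap, PointedCone.mem_positive] using hle

lemma isFace_iff_exists_dual : IsFace P F ↔
    ∃ f : Module.Dual ℝ (V × ℝ), (∀ x ∈ P, 0 ≤ f (x, 1)) ∧ ∀ x, x ∈ F ↔ x ∈ P ∧ f (x, 1) = 0 := by
  rcases F.eq_empty_or_nonempty with rfl | ⟨x₀, hx₀⟩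
  · exact iff_of_true (.inr (.inl rfl)) ⟨LinearMap.snd ℝ V ℝ, by simp, by simp⟩
  constructor
  · rintro (rfl | rfl | ⟨l, rfl⟩)
    · exact ⟨0, by simp, by simp⟩
    · exact absurd hx₀ (Set.notMem_empty x₀)
    · refine ⟨l x₀ • LinearMap.snd ℝ V ℝ - l ∘ₗ LinearMap.fst ℝ V ℝ, fun y hy => ?_, fun x => ?_⟩
      · simpa using hx₀.2 y hy
      · have hmax : ∀ x ∈ P, (∀ y ∈ P, l y ≤ l x) ↔ l x = l x₀ := fun x hx =>
          ⟨fun h => (hx₀.2 x hx).antisymm (h x₀ hx₀.1), fun h => h ▸ hx₀.2⟩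
        simpa [sub_eq_zero, eq_comm (a := l x₀)] using hmax x
  · rintro ⟨f, hf, hF⟩
    refine .inr (.inr ⟨-(f ∘ₗ LinearMap.inl ℝ V ℝ), Set.ext fun x => ?_⟩)
    have hcomp (y : V) : -f (y, 0) ≤ -f (x, 0) ↔ f (x, 1) ≤ f (y, 1) := by
      have hsplit (z : V) : f (z, 1) = f (z, 0) + f (0, 1) := by rw [← map_add]; simp
      rw [hsplit x, hsplit y, add_le_add_iff_right, neg_le_neg_iff]
    rw [hF]
    refine and_congr_right fun hx => ?_
    simp only [LinearMap.neg_apply, LinearMap.comp_apply, LinearMap.inl_apply, hcomp]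
    exact ⟨fun h y hy => h ▸ hf y hy, fun h =>
      ((h x₀ ((hF x₀).1 hx₀).1).trans_eq ((hF x₀).1 hx₀).2).antisymm (hf x hx)⟩

lemma IsPolytope.convex (hP : IsPolytope P) : Convex ℝ P := by
  obtain ⟨S, rfl⟩ := hP
  exact convex_convexHull ℝ _

lemma IsFace.convex (h : IsFace P F) (hP : Convex ℝ P) : Convex ℝ F := by
  obtain ⟨f, -, hF⟩ := isFace_iff_exists_dual.1 h
  intro x hx y hy a b ha hb hab
  rw [hF] at hx hy
  have hlift : (a • x + b • y, (1 : ℝ)) = a • (x, 1) + b • (y, 1) := by ext <;> simp [hab]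
  refine (hF _).2 ⟨hP hx.1 hy.1 ha hb hab, ?_⟩
  rw [hlift, map_add, map_smul, map_smul, hx.2, hy.2, smul_zero, smul_zero, add_zero]

lemma IsFace.isPolytope (h : IsFace P F) (hP : IsPolytope P) : IsPolytope F := by
  obtain ⟨f, hf, hF⟩ := isFace_iff_exists_dual.1 h
  have hconv := h.convex hP.convex
  obtain ⟨S, rfl⟩ := hP
  have hS : ∀ y ∈ S, y ∈ convexHull ℝ (S : Set V) := fun y hy => subset_convexHull ℝ _ hy
  refine ⟨S.filter (· ∈ F), subset_antisymm (fun x hx => ?_)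
    (convexHull_min (fun y hy => (Finset.mem_filter.1 hy).2) hconv)⟩
  obtain ⟨hxS, hfx⟩ := (hF x).1 hx
  obtain ⟨w, hw, hw₁, hwx⟩ := Finset.mem_convexHull'.1 hxS
  have hlift : (x, (1 : ℝ)) = ∑ y ∈ S, w y • (y, (1 : ℝ)) := by
    ext <;> simp [Prod.fst_sum, Prod.snd_sum, hw₁, hwx]
  have hzero : ∀ y ∈ S, w y ≠ 0 → y ∈ F := by
    intro y hy hwy
    simp only [hlift, map_sum, map_smul, smul_eq_mul] at hfx
    rw [Finset.sum_eq_zero_iff_of_nonneg fun y hy => mul_nonneg (hw y hy) (hf y (hS y hy))] at hfx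
    exact (hF y).2 ⟨hS y hy, (mul_eq_zero.1 (hfx y hy)).resolve_left hwy⟩
  refine Finset.mem_convexHull'.2 ⟨w, fun y hy => hw y (Finset.filter_subset _ _ hy), ?_, ?_⟩
  · rw [Finset.sum_filter_of_ne hzero, hw₁]
  · rw [Finset.sum_filter_of_ne fun y hy hne => hzero y hy (left_ne_zero_of_smul hne), hwx]

lemma IsPolytope.exists_isHRep_homogenization (hP : IsPolytope P) :
    ∃ (U : Submodule ℝ (V × ℝ)) (L : Finset (Module.Dual ℝ (V × ℝ))),
      IsHRep (homogenization P) U L := by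
  obtain ⟨S, rfl⟩ := hP
  have hhull : homogenization (convexHull ℝ (S : Set V)) = homogenization (S : Set V) := by
    refine le_antisymm (homogenization_le_iff_forall.2 fun x hx => ?_) ?_
    · have hsub : convexHull ℝ ((S : Set V) ×ˢ {(1 : ℝ)}) ⊆ homogenization (S : Set V) :=
        convexHull_min PointedCone.subset_hull (PointedCone.convex _)
      rw [convexHull_prod, convexHull_singleton] at hsub
      exact hsub ⟨hx, rfl⟩
    · exact homogenization_le_iff_forall.2 fun x hx =>
        mk_one_mem_homogenization (subset_convexHull ℝ _ hx)
  rw [hhull]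
  exact exists_isHRep_hull (S.finite_toSet.prod (Set.finite_singleton 1))

lemma IsFace.isFaceOf_homogenization (h : IsFace P F) (hP : Convex ℝ P) :
    (homogenization F).IsFaceOf (homogenization P) := by
  obtain ⟨f, hf, hF⟩ := isFace_iff_exists_dual.1 h
  exact isFaceOf_of_mem_iff_eq_zero (forall_mem_homogenization_nonneg_iff.2 hf)
    (mem_homogenization_iff_of_mem_iff hP hF)

lemma IsPolytope.exists_isFace_homogenization_eq (hP : IsPolytope P)
    {Q : PointedCone ℝ (V × ℝ)} (hQ : Q.IsFaceOf (homogenization P)) :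
    ∃ F, IsFace P F ∧ homogenization F = Q := by
  obtain ⟨U, L, h⟩ := hP.exists_isHRep_homogenization
  obtain ⟨f, hf, hfQ⟩ := h.exists_mem_face_iff_eq_zero hQ
  refine ⟨{x | x ∈ P ∧ f (x, 1) = 0},
    isFace_iff_exists_dual.2 ⟨f, forall_mem_homogenization_nonneg_iff.1 hf, fun x => Iff.rfl⟩, ?_⟩
  ext w
  rw [hfQ]
  exact mem_homogenization_iff_of_mem_iff hP.convex (fun x => Iff.rfl) w

lemma IsPolytope.isFace_iff_isFaceOf_homogenization (hP : IsPolytope P) (hF : Convex ℝ F) :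
    IsFace P F ↔ (homogenization F).IsFaceOf (homogenization P) := by
  refine ⟨fun h => h.isFaceOf_homogenization hP.convex, fun h => ?_⟩
  obtain ⟨G, hG, hGF⟩ := hP.exists_isFace_homogenization_eq h
  exact homogenization_injOn (hG.isPolytope hP).convex hF hGF ▸ hG

lemma IsPolytope.finite_faces (hP : IsPolytope P) : {F | IsFace P F}.Finite := by
  obtain ⟨U, L, h⟩ := hP.exists_isHRep_homogenization
  exact Set.Finite.of_injOn (fun F hF => hF.isFaceOf_homogenization hP.convex)
    (homogenization_injOn.mono fun F hF => (hF.isPolytope hP).convex) h.finite_faces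

lemma IsFace.isFace_iff_subset (hP : IsPolytope P) (hG : IsFace P G) (hF : IsFace P F) :
    IsFace G F ↔ F ⊆ G := by
  have hGpoly := hG.isPolytope hP
  rw [hGpoly.isFace_iff_isFaceOf_homogenization (hF.isPolytope hP).convex,
    (hF.isFaceOf_homogenization hP.convex).isFaceOf_iff_le (hG.isFaceOf_homogenization hP.convex),
    homogenization_le_iff hGpoly.convex]

lemma IsFace.trans (hP : IsPolytope P) (hG : IsFace P G) (hF : IsFace G F) : IsFace P F := by
  have hGpoly := hG.isPolytope hP
  rw [hP.isFace_iff_isFaceOf_homogenization (hF.isPolytope hGpoly).convex]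
  exact (hF.isFaceOf_homogenization hGpoly.convex).trans (hG.isFaceOf_homogenization hP.convex)

/-- The rank of a face in the face lattice, which is its dimension plus one
(see `IsPolytope.pdim_eq`). -/
noncomputable def faceRank (F : Set V) : ℕ :=
  Module.finrank ℝ (Submodule.span ℝ (homogenization F : Set (V × ℝ)))

lemma span_homogenization : Submodule.span ℝ (homogenization F : Set (V × ℝ)) =
    Submodule.span ℝ (F ×ˢ {(1 : ℝ)}) :=
  Submodule.span_span_of_tower ..

lemma span_homogenization_inf_ker_snd {x₀ : V} (hx₀ : x₀ ∈ F) :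
    Submodule.span ℝ (homogenization F : Set (V × ℝ)) ⊓ LinearMap.ker (LinearMap.snd ℝ V ℝ) =
      (vectorSpan ℝ F).map (LinearMap.inl ℝ V ℝ) := by
  rw [span_homogenization]
  apply le_antisymm
  · let toDirection : V × ℝ →ₗ[ℝ] V :=
      LinearMap.fst ℝ V ℝ - (LinearMap.snd ℝ V ℝ).smulRight x₀
    have hle : Submodule.span ℝ (F ×ˢ {(1 : ℝ)}) ≤ (vectorSpan ℝ F).comap toDirection := by
      rw [Submodule.span_le]
      rintro ⟨x, _⟩ ⟨hx, rfl⟩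
      simpa [toDirection] using vsub_mem_vectorSpan ℝ hx hx₀
    rintro ⟨v, r⟩ ⟨hv, hr⟩
    obtain rfl : r = 0 := hr
    exact ⟨v, by simpa [toDirection] using hle hv, rfl⟩
  · rw [vectorSpan_def, Submodule.map_span_le]
    rintro _ ⟨x, hx, y, hy, rfl⟩
    have hdiff : LinearMap.inl ℝ V ℝ (x -ᵥ y) = (x, (1 : ℝ)) - (y, 1) := by simp
    rw [hdiff]
    exact ⟨sub_mem (Submodule.subset_span ⟨hx, rfl⟩) (Submodule.subset_span ⟨hy, rfl⟩), by simp⟩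

lemma IsPolytope.pdim_eq (hP : IsPolytope P) : pdim P = (faceRank P : ℤ) - 1 := by
  rcases P.eq_empty_or_nonempty with rfl | ⟨x₀, hx₀⟩
  · rw [pdim, if_pos rfl, faceRank, span_homogenization, Set.empty_prod, Submodule.span_empty,
      finrank_bot, Nat.cast_zero, zero_sub]
  obtain ⟨U, L, h⟩ := hP.exists_isHRep_homogenization
  have hfin : FiniteDimensional ℝ (Submodule.span ℝ (homogenization P : Set (V × ℝ))) :=
    h.span_eq ▸ h.finiteDimensional
  have hrank := finrank_inf_ker_add_one (f := LinearMap.snd ℝ V ℝ)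
    (Submodule.subset_span (mk_one_mem_homogenization hx₀)) one_ne_zero
  rw [span_homogenization_inf_ker_snd hx₀,
    ← (Submodule.equivMapOfInjective _ LinearMap.inl_injective _).finrank_eq] at hrank
  rw [pdim, if_neg (Set.nonempty_of_mem hx₀).ne_empty, direction_affineSpan, faceRank, ← hrank]
  simp

lemma IsPolytope.faceRank_lt (hP : IsPolytope P) (hF : IsFace P F) (hne : F ≠ P) :
    faceRank F < faceRank P := by
  obtain ⟨U, L, h⟩ := hP.exists_isHRep_homogenization
  exact h.finrank_span_lt (hF.isFaceOf_homogenization hP.convex)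
    fun heq => hne (homogenization_injOn (hF.isPolytope hP).convex hP.convex heq)

theorem IsPolytope.finsum_faces_neg_one_pow_faceRank (hP : IsPolytope P) (hE : IsFace P E)
    (hne : E ≠ P) :
    ∑ᶠ F ∈ {F | IsFace P F ∧ E ⊆ F}, (-1 : ℤ) ^ faceRank F = 0 := by
  obtain ⟨U, L, h⟩ := hP.exists_isHRep_homogenization
  have hconv {F : Set V} (hF : IsFace P F) : Convex ℝ F := (hF.isPolytope hP).convex
  rw [← h.finsum_faces_neg_one_pow_finrank_span (hE.isFaceOf_homogenization hP.convex)
    fun heq => hne (homogenization_injOn (hconv hE) hP.convex heq)]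
  refine finsum_mem_eq_of_bijOn homogenization ⟨fun F ⟨hF, hEF⟩ => ?_,
    homogenization_injOn.mono fun F hF => hconv hF.1, fun Q ⟨hQ, hEQ⟩ => ?_⟩ fun _ _ => rfl
  · exact ⟨hF.isFaceOf_homogenization hP.convex, (homogenization_le_iff (hconv hF)).2 hEF⟩
  · obtain ⟨F, hF, rfl⟩ := hP.exists_isFace_homogenization_eq hQ
    exact ⟨F, ⟨hF, (homogenization_le_iff (hconv hF)).1 hEQ⟩, rfl⟩

end Homogenization

section Reflection

lemma coeff_truncG (d : ℤ) (h : ℚ[X]) (k : ℕ) : (truncG d h).coeff k =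
    if k ≤ d.toNat / 2 then h.coeff k - (if k = 0 then 0 else h.coeff (k - 1)) else 0 := by
  simp only [truncG, finsetSum_coeff, coeff_C_mul, coeff_X_pow, mul_ite, mul_one, mul_zero]
  rw [Finset.sum_ite_eq]
  simp only [Finset.mem_range, Nat.lt_succ_iff]

lemma natDegree_truncG_le (d : ℤ) (h : ℚ[X]) : (truncG d h).natDegree ≤ d.toNat / 2 :=
  natDegree_le_iff_coeff_eq_zero.2 fun k hk => by rw [coeff_truncG, if_neg hk.not_ge]

lemma natDegree_X_sub_one_pow_le {R : Type*} [Ring R] (n : ℕ) :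
    ((X - 1 : R[X]) ^ n).natDegree ≤ n := by
  have hdeg : (X - 1 : R[X]).natDegree ≤ 1 := by compute_degree
  simpa using natDegree_pow_le_of_le n hdeg

lemma reflect_X_sub_one_pow {R : Type*} [CommRing R] (n : ℕ) :
    reflect n ((X - 1 : R[X]) ^ n) = (1 - X) ^ n := by
  induction n with
  | zero => simp
  | succ n ih =>
    have hdeg : (X - 1 : R[X]).natDegree ≤ 1 := by compute_degree
    have hone : reflect 1 (X - 1 : R[X]) = 1 - X := by
      rw [reflect_sub, reflect_one_X, reflect_one, pow_one]
    rw [pow_succ, reflect_mul _ _ (natDegree_X_sub_one_pow_le n) hdeg, ih, hone, pow_succ]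

lemma reflect_sum {R ι : Type*} [Semiring R] (s : Finset ι) (f : ι → R[X]) (n : ℕ) :
    reflect n (∑ i ∈ s, f i) = ∑ i ∈ s, reflect n (f i) := by
  induction s using Finset.induction_on with
  | empty => simp
  | insert a s ha ih => rw [Finset.sum_insert ha, Finset.sum_insert ha, reflect_add, ih]

lemma coeff_eq_coeff_sub_of_reflect_eq {R : Type*} [Semiring R] {p : R[X]} {d k : ℕ}
    (hp : reflect d p = p) (hk : k ≤ d) : p.coeff k = p.coeff (d - k) := by
  conv_lhs => rw [← hp, coeff_reflect, revAt_le hk]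

lemma coeff_X_sub_one_mul {R : Type*} [Ring R] (p : R[X]) (k : ℕ) :
    ((X - 1) * p).coeff k = (if k = 0 then 0 else p.coeff (k - 1)) - p.coeff k := by
  rw [sub_mul, one_mul, coeff_sub]
  cases k <;> simp

lemma reflect_truncG {h : ℚ[X]} {d : ℕ} (hdeg : h.natDegree ≤ d) (hsymm : reflect d h = h) :
    reflect (d + 1) (truncG d h) = (X - 1) * h + truncG d h := by
  have hzero {i : ℕ} (hi : d < i) : h.coeff i = 0 :=
    coeff_eq_zero_of_natDegree_lt (hdeg.trans_lt hi)
  have hcoeff {i j : ℕ} (hij : i + j = d) : h.coeff i = h.coeff j := by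
    rw [coeff_eq_coeff_sub_of_reflect_eq hsymm (by lia : i ≤ d)]
    congr 1
    lia
  ext k
  rw [coeff_add, coeff_X_sub_one_mul, coeff_reflect, coeff_truncG, coeff_truncG, Int.toNat_natCast]
  rcases lt_or_ge (d + 1) k with hk | hk
  · rw [revAt_eq_self_of_lt hk, if_neg (by lia), if_neg (by lia), hzero (by lia : d < k - 1),
      hzero (by lia : d < k)]
    simp
  rw [revAt_le hk]
  rcases le_or_gt k (d / 2) with hlow | hhigh
  · rw [if_neg (by lia), if_pos hlow]
    ring
  rw [if_neg hhigh.not_ge, if_neg (by lia : k ≠ 0), add_zero]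
  rcases eq_or_ne k (d + 1) with rfl | hne
  · simp [hzero d.lt_succ_self, hcoeff (zero_add d)]
  rw [if_neg (by lia : d + 1 - k ≠ 0), hcoeff (by lia : k - 1 + (d + 1 - k) = d),
    hcoeff (by lia : k + (d + 1 - k - 1) = d)]
  split_ifs with hmid
  · rfl
  · rw [hcoeff (by lia : d + 1 - k + (d + 1 - k - 1) = d), sub_self]

end Reflection

section EulerianPoset

variable {α : Type*} [PartialOrder α] [OrderBot α] [LocallyFiniteOrder α]

/-- The function `ρ` ranks a locally finite poset whose nontrivial intervals have as many elements
of even as of odd rank, i.e. an Eulerian poset. -/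
structure IsEulerianRank (ρ : α → ℕ) : Prop where
  strictMono : StrictMono ρ
  map_bot : ρ ⊥ = 0
  sum_Icc_neg_one_pow {a b : α} (hab : a < b) : ∑ x ∈ Finset.Icc a b, (-1 : ℤ) ^ ρ x = 0

/-- The polynomials `g b` and `h b` are the toric polynomials of the lower intervals `[⊥, b]` of a
poset ranked by `ρ`. An element of rank `r` plays the role of a face of dimension `r - 1`. -/
structure IsToricPair (ρ : α → ℕ) (g h : α → ℚ[X]) : Prop where
  h_bot : h ⊥ = 1
  h_eq {b : α} (hb : b ≠ ⊥) : h b = ∑ a ∈ Finset.Iio b, g a * (X - 1) ^ (ρ b - ρ a - 1)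
  g_eq (b : α) : g b = truncG (ρ b - 1) (h b)

variable {ρ : α → ℕ} {g h : α → ℚ[X]} {a b : α}

lemma IsEulerianRank.rank_pos (hρ : IsEulerianRank ρ) (hb : b ≠ ⊥) : 0 < ρ b :=
  hρ.map_bot ▸ hρ.strictMono (bot_lt_iff_ne_bot.2 hb)

lemma IsEulerianRank.sum_Ico_neg_one_pow_sub (hρ : IsEulerianRank ρ) (hab : a < b) {R : Type*}
    [CommRing R] : ∑ x ∈ Finset.Ico a b, (-1 : R) ^ (ρ b - ρ x) = -1 := by
  have hsign {x : α} (hx : x ≤ b) : (-1 : ℤ) ^ (ρ b - ρ x) = (-1) ^ ρ b * (-1) ^ ρ x := by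
    rw [← pow_add, ← Nat.sub_add_cancel (hρ.strictMono.monotone hx), add_assoc, pow_add,
      ← two_mul, Nat.add_sub_cancel]
    simp
  have hsum : ∑ x ∈ Finset.Icc a b, (-1 : ℤ) ^ (ρ b - ρ x) = 0 := by
    rw [Finset.sum_congr rfl fun x hx => hsign (Finset.mem_Icc.1 hx).2, ← Finset.mul_sum,
      hρ.sum_Icc_neg_one_pow hab, mul_zero]
  rw [← Finset.sum_Ico_add_eq_sum_Icc hab.le, Nat.sub_self, pow_zero] at hsum
  exact_mod_cast congrArg (Int.cast : ℤ → R) (eq_neg_of_add_eq_zero_left hsum)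

namespace IsToricPair

lemma g_bot (ht : IsToricPair ρ g h) (hρ : ρ ⊥ = 0) : g ⊥ = 1 := by
  rw [ht.g_eq, ht.h_bot, hρ]
  simp [truncG]

lemma natDegree_g_le (ht : IsToricPair ρ g h) (b : α) : (g b).natDegree ≤ ρ b := by
  rw [ht.g_eq]
  exact (natDegree_truncG_le _ _).trans (by lia)

lemma natDegree_h_le (ht : IsToricPair ρ g h) (hρ : StrictMono ρ) (hb : b ≠ ⊥) :
    (h b).natDegree ≤ ρ b - 1 := by
  rw [ht.h_eq hb]
  refine natDegree_sum_le_of_forall_le _ _ fun a ha => ?_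
  have hab : ρ a < ρ b := hρ (Finset.mem_Iio.1 ha)
  exact (natDegree_mul_le_of_le (ht.natDegree_g_le a) (natDegree_X_sub_one_pow_le _)).trans
    (by lia)

lemma X_sub_one_mul_h (ht : IsToricPair ρ g h) (hρ : StrictMono ρ) (hb : b ≠ ⊥) :
    (X - 1) * h b = ∑ a ∈ Finset.Iio b, g a * (X - 1) ^ (ρ b - ρ a) := by
  rw [ht.h_eq hb, Finset.mul_sum]
  refine Finset.sum_congr rfl fun a ha => ?_
  rw [mul_left_comm, mul_pow_sub_one (Nat.sub_ne_zero_of_lt (hρ (Finset.mem_Iio.1 ha)))]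

lemma reflect_g_mul_X_sub_one_pow (ht : IsToricPair ρ g h) (hρ : Monotone ρ) (hab : a ≤ b)
    (hg : reflect (ρ a) (g a) = ∑ e ∈ Finset.Iic a, g e * (X - 1) ^ (ρ a - ρ e)) :
    reflect (ρ b) (g a * (X - 1) ^ (ρ b - ρ a)) =
      ∑ e ∈ Finset.Iic a, g e * (X - 1) ^ (ρ b - ρ e) * (-1) ^ (ρ b - ρ a) := by
  have hrank := hρ hab
  rw [show reflect (ρ b) (g a * (X - 1) ^ (ρ b - ρ a)) =
      reflect (ρ a + (ρ b - ρ a)) (g a * (X - 1) ^ (ρ b - ρ a)) by rw [Nat.add_sub_cancel' hrank],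
    reflect_mul _ _ (ht.natDegree_g_le a) (natDegree_X_sub_one_pow_le _), hg,
    reflect_X_sub_one_pow, Finset.sum_mul]
  refine Finset.sum_congr rfl fun e he => ?_
  have hea := hρ (Finset.mem_Iic.1 he)
  rw [← neg_sub X 1, neg_pow (X - 1 : ℚ[X]), ← Nat.sub_add_sub_cancel hrank hea, pow_add]
  ring

/-- Substituting the identity for `g` at each `a < b` and exchanging summations leaves the sums
`∑ a ∈ Ico e b, (-1) ^ (ρ b - ρ a) = -1`. -/
lemma reflect_X_sub_one_mul_h (ht : IsToricPair ρ g h) (hρ : IsEulerianRank ρ) (hb : b ≠ ⊥)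
    (hg : ∀ a < b, reflect (ρ a) (g a) = ∑ e ∈ Finset.Iic a, g e * (X - 1) ^ (ρ a - ρ e)) :
    reflect (ρ b) ((X - 1) * h b) = -((X - 1) * h b) := by
  have hmono := hρ.strictMono.monotone
  calc reflect (ρ b) ((X - 1) * h b)
      = ∑ a ∈ Finset.Iio b, ∑ e ∈ Finset.Iic a,
          g e * (X - 1) ^ (ρ b - ρ e) * (-1) ^ (ρ b - ρ a) := by
        rw [ht.X_sub_one_mul_h hρ.strictMono hb, reflect_sum]
        refine Finset.sum_congr rfl fun a ha => ?_
        rw [Finset.mem_Iio] at ha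
        exact ht.reflect_g_mul_X_sub_one_pow hmono ha.le (hg a ha)
    _ = ∑ e ∈ Finset.Iio b, ∑ a ∈ Finset.Ico e b,
          g e * (X - 1) ^ (ρ b - ρ e) * (-1) ^ (ρ b - ρ a) := by
        refine Finset.sum_comm' fun a e => ?_
        simp only [Finset.mem_Iio, Finset.mem_Iic, Finset.mem_Ico]
        exact ⟨fun ⟨hab, hea⟩ => ⟨⟨hea, hab⟩, hea.trans_lt hab⟩, fun ⟨⟨hea, hab⟩, _⟩ => ⟨hab, hea⟩⟩
    _ = ∑ e ∈ Finset.Iio b, -(g e * (X - 1) ^ (ρ b - ρ e)) := by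
        refine Finset.sum_congr rfl fun e he => ?_
        rw [← Finset.mul_sum, hρ.sum_Ico_neg_one_pow_sub (Finset.mem_Iio.1 he), mul_neg_one]
    _ = -((X - 1) * h b) := by
        rw [Finset.sum_neg_distrib, ht.X_sub_one_mul_h hρ.strictMono hb]

lemma reflect_h_of_forall_lt (ht : IsToricPair ρ g h) (hρ : IsEulerianRank ρ) (hb : b ≠ ⊥)
    (hg : ∀ a < b, reflect (ρ a) (g a) = ∑ e ∈ Finset.Iic a, g e * (X - 1) ^ (ρ a - ρ e)) :
    reflect (ρ b - 1) (h b) = h b := by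
  have hrank : 1 + (ρ b - 1) = ρ b := Nat.add_sub_cancel' (hρ.rank_pos hb)
  have hanti := ht.reflect_X_sub_one_mul_h hρ hb hg
  rw [← hrank, ← pow_one (X - 1 : ℚ[X]),
    reflect_mul _ _ (natDegree_X_sub_one_pow_le 1) (ht.natDegree_h_le hρ.strictMono hb),
    reflect_X_sub_one_pow, pow_one, pow_one, ← neg_sub X 1, neg_mul, neg_inj] at hanti
  exact mul_left_cancel₀ (X_sub_C_ne_zero (1 : ℚ)) hanti

/-- The Kazhdan–Lusztig–Stanley identity for the toric `g`-polynomials. -/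
theorem reflect_g (ht : IsToricPair ρ g h) (hρ : IsEulerianRank ρ) (b : α) :
    reflect (ρ b) (g b) = ∑ a ∈ Finset.Iic b, g a * (X - 1) ^ (ρ b - ρ a) := by
  induction hn : ρ b using Nat.strong_induction_on generalizing b with
  | _ n ih =>
  subst hn
  rcases eq_or_ne b ⊥ with rfl | hb
  · simp [hρ.map_bot, ht.g_bot hρ.map_bot]
  have hrank := hρ.rank_pos hb
  have hsymm := ht.reflect_h_of_forall_lt hρ hb fun a ha => ih _ (hρ.strictMono ha) a rfl
  have htrunc := reflect_truncG (ht.natDegree_h_le hρ.strictMono hb) hsymm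
  rw [Nat.sub_add_cancel hrank, Nat.cast_pred hrank, ← ht.g_eq,
    ht.X_sub_one_mul_h hρ.strictMono hb] at htrunc
  rw [htrunc, ← Finset.sum_Iio_add_eq_sum_Iic, Nat.sub_self, pow_zero, mul_one]

theorem reflect_h (ht : IsToricPair ρ g h) (hρ : IsEulerianRank ρ) (hb : b ≠ ⊥) :
    reflect (ρ b - 1) (h b) = h b :=
  ht.reflect_h_of_forall_lt hρ hb fun a _ => ht.reflect_g hρ a

end IsToricPair

end EulerianPoset

section FacePoset

variable {V : Type*} [AddCommGroup V] [Module ℝ V] {P : Set V}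

lemma isFace_self (P : Set V) : IsFace P P := .inl rfl

lemma isFace_empty (P : Set V) : IsFace P ∅ := .inr (.inl rfl)

lemma pdim_empty : pdim (∅ : Set V) = -1 := if_pos rfl

lemma faceRank_empty : faceRank (∅ : Set V) = 0 := by
  have hdim := IsPolytope.pdim_eq (V := V) ⟨∅, by rw [Finset.coe_empty, convexHull_empty]⟩
  rw [pdim_empty] at hdim
  lia

lemma IsPolytope.faceRank_pos (hP : IsPolytope P) (hne : P ≠ ∅) : 0 < faceRank P :=
  (Nat.zero_le _).trans_lt (hP.faceRank_lt (isFace_empty P) hne.symm)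

lemma relHAux_empty_empty (n : ℕ) : relHAux n (∅ : Set V) ∅ = 1 := by
  cases n <;> simp [relHAux]

lemma IsPolytope.relHAux_eq_relHAux (hP : IsPolytope P) {m n : ℕ} (hm : faceRank P ≤ m)
    (hn : faceRank P ≤ n) : relHAux m ∅ P = relHAux n ∅ P := by
  induction m generalizing n P with
  | zero =>
    obtain rfl : P = ∅ := by_contra fun hne => (hP.faceRank_pos hne).not_ge hm
    rw [relHAux_empty_empty, relHAux_empty_empty]
  | succ m ih =>
    rcases eq_or_ne P ∅ with rfl | hne
    · rw [relHAux_empty_empty, relHAux_empty_empty]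
    obtain ⟨n, rfl⟩ := Nat.exists_eq_add_one.2 ((hP.faceRank_pos hne).trans_le hn)
    rw [relHAux, relHAux, if_neg hne, if_neg hne]
    refine finsum_mem_congr rfl fun F ⟨hF, _, hFP⟩ => ?_
    have hlt := hP.faceRank_lt hF hFP
    rw [ih (hF.isPolytope hP) (n := n) (by lia) (by lia)]

lemma IsPolytope.toricH_eq_relHAux (hP : IsPolytope P) {n : ℕ} (hn : faceRank P ≤ n) :
    toricH P = relHAux n ∅ P :=
  hP.relHAux_eq_relHAux (by rw [hP.pdim_eq]; lia) hn

lemma IsPolytope.toricG_eq (hP : IsPolytope P) :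
    toricG P = truncG (faceRank P - 1) (toricH P) := by
  rw [toricG, relG, toricH, pdim_empty, hP.pdim_eq]
  congr 1
  lia

lemma IsPolytope.toricH_eq_finsum (hP : IsPolytope P) (hne : P ≠ ∅) :
    toricH P = ∑ᶠ F ∈ {F | IsFace P F ∧ F ≠ P},
      toricG F * (X - 1) ^ (faceRank P - faceRank F - 1) := by
  obtain ⟨n, hn⟩ := Nat.exists_eq_add_one.2 (hP.faceRank_pos hne)
  rw [hP.toricH_eq_relHAux hn.le, relHAux, if_neg hne]
  refine finsum_mem_congr (by simp) fun F ⟨hF, hFP⟩ => ?_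
  have hlt := hP.faceRank_lt hF hFP
  have hFpoly := hF.isPolytope hP
  have hexp : (pdim P - pdim F - 1).toNat = faceRank P - faceRank F - 1 := by
    rw [hP.pdim_eq, hFpoly.pdim_eq]
    lia
  rw [← hFpoly.toricH_eq_relHAux (by lia : faceRank F ≤ n), hexp]
  rfl

/-- The faces of `P`, ordered by inclusion. -/
abbrev Faces (P : Set V) : Type _ := {F : Set V // IsFace P F}

instance (P : Set V) : OrderBot (Faces P) where
  bot := ⟨∅, isFace_empty P⟩
  bot_le F := Set.empty_subset F.1

/-- Intervals of the face poset are finite because a polytope has finitely many faces. -/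
noncomputable abbrev IsPolytope.locallyFiniteOrderFaces (hP : IsPolytope P) :
    LocallyFiniteOrder (Faces P) :=
  haveI : Fintype (Faces P) := hP.finite_faces.fintype
  Fintype.toLocallyFiniteOrder

lemma finsum_mem_eq_sum_faces {M : Type*} [AddCommMonoid M] {s : Set (Set V)}
    {t : Finset (Faces P)} (hs : ∀ F ∈ s, IsFace P F) (ht : ∀ F : Faces P, F ∈ t ↔ F.1 ∈ s)
    (f : Set V → M) : ∑ᶠ F ∈ s, f F = ∑ F ∈ t, f F := by
  rw [← finsum_mem_coe_finset]
  exact (finsum_mem_eq_of_bijOn Subtype.val ⟨fun F hF => (ht F).1 hF, Subtype.val_injective.injOn,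
    fun F hF => ⟨⟨F, hs F hF⟩, (ht _).2 hF, rfl⟩⟩ fun _ _ => rfl).symm

lemma IsPolytope.isEulerianRank_faceRank (hP : IsPolytope P) :
    letI := hP.locallyFiniteOrderFaces
    IsEulerianRank fun F : Faces P => faceRank F.1 := by
  let _ := hP.locallyFiniteOrderFaces
  refine ⟨fun F G hFG => ?_, faceRank_empty, fun {E G} hEG => ?_⟩
  · exact (G.2.isPolytope hP).faceRank_lt ((G.2.isFace_iff_subset hP F.2).2 hFG.le)
      (Subtype.coe_ne_coe.2 hFG.ne)
  · rw [← (G.2.isPolytope hP).finsum_faces_neg_one_pow_faceRank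
      ((G.2.isFace_iff_subset hP E.2).2 hEG.le) (Subtype.coe_ne_coe.2 hEG.ne)]
    symm
    refine finsum_mem_eq_sum_faces (fun F hF => G.2.trans hP hF.1) (fun F => ?_) _
    rw [Finset.mem_Icc, Set.mem_ofPred_eq, G.2.isFace_iff_subset hP F.2, and_comm]
    rfl

lemma IsPolytope.isToricPair_toricG_toricH (hP : IsPolytope P) :
    letI := hP.locallyFiniteOrderFaces
    IsToricPair (fun F : Faces P => faceRank F.1) (fun F => toricG F.1) fun F => toricH F.1 := by
  let _ := hP.locallyFiniteOrderFaces
  refine ⟨relHAux_empty_empty _, fun {G} hG => ?_, fun F => (F.2.isPolytope hP).toricG_eq⟩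
  rw [(G.2.isPolytope hP).toricH_eq_finsum (Subtype.coe_ne_coe.2 hG)]
  refine finsum_mem_eq_sum_faces (fun F hF => G.2.trans hP hF.1) (fun F => ?_) _
  rw [Finset.mem_Iio, Set.mem_ofPred_eq, G.2.isFace_iff_subset hP F.2, lt_iff_le_and_ne,
    Subtype.coe_ne_coe]
  rfl

theorem IsPolytope.reflect_toricH (hP : IsPolytope P) (hne : P ≠ ∅) :
    reflect (faceRank P - 1) (toricH P) = toricH P := by
  let _ := hP.locallyFiniteOrderFaces
  have hP_ne_bot : (⟨P, isFace_self P⟩ : Faces P) ≠ ⊥ := Subtype.coe_ne_coe.1 hne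
  have hsymm := hP.isToricPair_toricG_toricH.reflect_h hP.isEulerianRank_faceRank hP_ne_bot
  exact hsymm

end FacePoset

/-- Stanley's toric Dehn–Sommerville relations: for every `d`-polytope `P` and
`0 ≤ k ≤ d`, `h_k(P) = h_{d-k}(P)`. -/
theorem toric_dehn_sommerville {V : Type*} [AddCommGroup V] [Module ℝ V]
    (P : Set V) (hP : IsPolytope P) (d : ℕ) (hdim : pdim P = (d : ℤ))
    (k : ℕ) (hk : k ≤ d) :
    (toricH P).coeff k = (toricH P).coeff (d - k) := by
  have hne : P ≠ ∅ := by
    rintro rfl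
    rw [pdim_empty] at hdim
    lia
  have hrank : faceRank P - 1 = d := by
    rw [hP.pdim_eq] at hdim
    lia
  exact coeff_eq_coeff_sub_of_reflect_eq (hrank ▸ hP.reflect_toricH hne) hk
end
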